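/- arXiv:math/0306218 — 3 statements merged into one kernel-verified Lean document; each statement's English description precedes it below -/
import Mathlib

section
/- Assume Q_k = k + O(1) and Q_k > (k − 1/2)·θ/π for all k. Let P be a sequence of positive reals with φ_j(P,P) = Q_j for all j and ln P_k = α_θ·ln k + o(1). Fix 0 < ε < 2, and let (X^{(n)})_{n≥0} be a sequence of sequences of positive reals with ln X^{(0)}_k = ln P_k + O(k^{−ε}) and φ_j(X^{(n)}, X^{(n+1)}) = Q_j for all j ≥ 1 and n ≥ 0. Then there exist C > 0 and λ ∈ (0,1) such that sup_{k≥1} k^{ε}·|ln X^{(n)}_k − ln P_k| ≤ C·λ^n for all n ≥ 0. -/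
open Filter Asymptotics MeasureTheory
open scoped ENNReal Topology

/-- `Theta θ E' E` is the argument of the complex number `E' + E·e^{iθ}`;
for `0 < θ < π` and `E', E > 0` it lies in `(0, θ)` and equals
`arctan (sin θ / (E'/E + cos θ))` with the branch taken in `(0, θ)`. -/
noncomputable def Theta (θ E' E : ℝ) : ℝ :=
  Complex.arg ((E' : ℂ) + (E : ℂ) * Complex.exp (θ * Complex.I))

/-- `phi θ X Y j = (1/π) · ∑_{k ≥ 1} Θ(X_k, Y_j) ∈ (0, ∞]`, where sequences are
indexed by `ℕ` and only the values at indices `k ≥ 1` are used. -/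
noncomputable def phi (θ : ℝ) (X Y : ℕ → ℝ) (j : ℕ) : ℝ≥0∞ :=
  ENNReal.ofReal (1 / Real.pi) * ∑' k : ℕ, ENNReal.ofReal (Theta θ (X (k + 1)) (Y j))

/-- `Pker θ E E' = E·E' / (E² + 2·cos θ·E·E' + E'²)`. -/
noncomputable def Pker (θ E E' : ℝ) : ℝ :=
  E * E' / (E ^ 2 + 2 * Real.cos θ * E * E' + E' ^ 2)

/-- The drift `D_α = (1/π) ∫_0^∞ Θ(s^α, 1) ds`. -/
noncomputable def Drift (θ α : ℝ) : ℝ :=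
  (1 / Real.pi) * ∫ s in Set.Ioi (0 : ℝ), Theta θ (s ^ α) 1

/-- `S_ε = ∫_0^∞ s^{-ε} / (s^{α_θ} + 2 cos θ + s^{-α_θ}) ds` with `α_θ = 1 + θ/π`. -/
noncomputable def Sfun (θ ε : ℝ) : ℝ :=
  ∫ s in Set.Ioi (0 : ℝ), s ^ (-ε) /
    (s ^ (1 + θ / Real.pi) + 2 * Real.cos θ + s ^ (-(1 + θ / Real.pi)))

/-- kernel -/
noncomputable def kap (θ u : ℝ) : ℝ := 1 / (2 * Real.cosh u + 2 * Real.cos θ)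

noncomputable def gg (θ u : ℝ) : ℝ := (Complex.log (1 + Complex.exp (u + θ * Complex.I))).im

lemma abs_cos_lt {θ : ℝ} (hθ : 0 < θ) (hθπ : θ < Real.pi) : |Real.cos θ| < 1 := by
  have h := Real.sin_pos_of_pos_of_lt_pi hθ hθπ
  have h2 := Real.sin_sq_add_cos_sq θ
  rw [abs_lt]
  constructor <;> nlinarith

lemma kden_pos {θ : ℝ} (hθ : 0 < θ) (hθπ : θ < Real.pi) (u : ℝ) :
    0 < 2 * Real.cosh u + 2 * Real.cos θ := by
  have h := abs_cos_lt hθ hθπ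
  have := Real.one_le_cosh u
  have := (abs_lt.1 h).1
  linarith

lemma kap_pos {θ : ℝ} (hθ : 0 < θ) (hθπ : θ < Real.pi) (u : ℝ) : 0 < kap θ u :=
  one_div_pos.2 (kden_pos hθ hθπ u)

lemma kap_cont {θ : ℝ} (hθ : 0 < θ) (hθπ : θ < Real.pi) : Continuous (kap θ) := by
  unfold kap
  refine Continuous.div continuous_const (by fun_prop) (fun u => (kden_pos hθ hθπ u).ne')

lemma kap_neg (θ u : ℝ) : kap θ (-u) = kap θ u := by simp [kap]

lemma kap_le {θ : ℝ} (hθ : 0 < θ) (hθπ : θ < Real.pi) :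
    ∃ C, 0 < C ∧ ∀ u, kap θ u ≤ C * Real.exp (-|u|) := by
  have h := abs_cos_lt hθ hθπ
  refine ⟨1 / (1 - |Real.cos θ|), by apply one_div_pos.2; linarith, fun u => ?_⟩
  unfold kap
  rw [Real.exp_neg, ← div_eq_mul_inv, div_div]
  apply one_div_le_one_div_of_le
  · have := Real.exp_pos |u|
    exact mul_pos (by linarith) this
  · have h1 : Real.exp |u| ≤ 2 * Real.cosh u := by
      rw [← Real.cosh_abs, Real.cosh_eq]
      have := Real.exp_pos (-|u|)
      linarith
    have h2 := Real.one_le_cosh u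
    have h3 := neg_abs_le (Real.cos θ)
    have h4 := abs_nonneg (Real.cos θ)
    nlinarith

lemma cosh_le_exp (a x : ℝ) : Real.cosh a ≤ Real.exp |x| * Real.cosh (a + x) := by
  rw [Real.cosh_eq, Real.cosh_eq]
  have h1 : Real.exp a ≤ Real.exp |x| * Real.exp (a + x) := by
    rw [← Real.exp_add]; apply Real.exp_le_exp.2; have := neg_abs_le x; linarith
  have h2 : Real.exp (-a) ≤ Real.exp |x| * Real.exp (-(a + x)) := by
    rw [← Real.exp_add]; apply Real.exp_le_exp.2; have := le_abs_self x; linarith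
  linarith

lemma kap_lip {θ : ℝ} (hθ : 0 < θ) (hθπ : θ < Real.pi) :
    ∃ B, 0 < B ∧ ∀ u x, kap θ (u + x) ≤ Real.exp (B * |x|) * kap θ u := by
  have h := abs_cos_lt hθ hθπ
  have h0 : 0 < 1 - |Real.cos θ| := by linarith
  refine ⟨1 / (1 - |Real.cos θ|), by positivity, fun u x => ?_⟩
  set c := |Real.cos θ| with hc
  set E := Real.exp (1 / (1 - c) * |x|) with hE
  have hB1 : 1 ≤ 1 / (1 - c) := by
    rw [le_div_iff₀ h0]; have := abs_nonneg (Real.cos θ); linarith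
  have hbern : 1 + (1 / (1 - c)) * (Real.exp |x| - 1) ≤ E := by
    have h5 := one_add_mul_self_le_rpow_one_add (s := Real.exp |x| - 1)
      (by have := Real.exp_pos |x|; linarith) hB1
    rw [add_sub_cancel, ← Real.exp_mul, mul_comm |x|] at h5
    exact h5
  have hb2 : Real.exp |x| - 1 ≤ (1 - c) * (E - 1) := by
    have := mul_le_mul_of_nonneg_left hbern h0.le
    have e : (1 - c) * (1 + (1 / (1 - c)) * (Real.exp |x| - 1)) = (1 - c) + (Real.exp |x| - 1) := by
      field_simp
    linarith
  unfold kap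
  rw [mul_one_div, div_le_div_iff₀ (kden_pos hθ hθπ _) (kden_pos hθ hθπ _)]
  have h6 := cosh_le_exp u x
  have h7 := Real.one_le_cosh (u + x)
  have h8 : 0 ≤ (E - Real.exp |x|) := by
    have : Real.exp |x| ≤ E := by
      apply Real.exp_le_exp.2; have := abs_nonneg x; nlinarith
    linarith
  have h9 : 1 ≤ E := Real.one_le_exp (by have := abs_nonneg x; positivity)
  have h10 := neg_abs_le (Real.cos θ)
  have h11 : (E - 1) * (-c) ≤ (E - 1) * Real.cos θ :=
    mul_le_mul_of_nonneg_left h10 (by linarith)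
  nlinarith [mul_le_mul_of_nonneg_left h7 h8]

lemma gg_slit {θ : ℝ} (hθ : 0 < θ) (hθπ : θ < Real.pi) (u : ℝ) :
    (1 + Complex.exp (u + θ * Complex.I)) ∈ Complex.slitPlane := by
  right
  have h := Real.sin_pos_of_pos_of_lt_pi hθ hθπ
  have := Real.exp_pos u
  simp [Complex.exp_im]
  exact h.ne'

lemma gg_deriv {θ : ℝ} (hθ : 0 < θ) (hθπ : θ < Real.pi) (u : ℝ) :
    HasDerivAt (gg θ) (Real.sin θ * kap θ u) u := by
  have h1 : HasDerivAt (fun t : ℝ => (1 + Complex.exp (t + θ * Complex.I)))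
      (Complex.exp (u + θ * Complex.I)) u := by
    have := ((Complex.ofRealCLM.hasDerivAt (x := u)).add_const (θ * Complex.I)).cexp.const_add 1
    simpa using this
  have h2 := h1.clog_real (gg_slit hθ hθπ u)
  have h3 := (Complex.imCLM.hasFDerivAt.comp_hasDerivAt u h2)
  refine h3.congr_deriv ?_
  have hk := (kden_pos hθ hθπ u).ne'
  have hE := Real.exp_pos u
  simp only [Complex.imCLM_apply, Complex.div_im, Complex.exp_im, Complex.exp_re, Complex.add_re, Complex.add_im,
    Complex.one_re, Complex.one_im, Complex.normSq_apply]
  simp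
  have hs := Real.sin_sq_add_cos_sq θ
  unfold kap
  have e1 : (1 + Real.exp u * Real.cos θ) * (1 + Real.exp u * Real.cos θ) +
     Real.exp u * Real.sin θ * (Real.exp u * Real.sin θ) = Real.exp u * (2 * Real.cosh u + 2 * Real.cos θ) := by
    rw [Real.cosh_eq, Real.exp_neg]
    field_simp
    linear_combination (Real.exp u)^2 * hs
  rw [e1]
  field_simp
  ring

lemma Theta_exp (θ a b : ℝ) : Theta θ (Real.exp a) (Real.exp b) = gg θ (b - a) := by
  unfold Theta gg
  rw [Complex.log_im]
  have : ((Real.exp a : ℝ) : ℂ) + (Real.exp b : ℝ) * Complex.exp (θ * Complex.I)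
     = (Real.exp a : ℝ) * (1 + Complex.exp ((b - a : ℝ) + θ * Complex.I)) := by
    push_cast
    rw [mul_add, mul_one, ← Complex.exp_add, ← Complex.exp_add]
    congr 2; ring
  rw [this, Complex.arg_real_mul _ (Real.exp_pos a)]

lemma gg_nonneg {θ : ℝ} (hθ : 0 < θ) (hθπ : θ < Real.pi) (u : ℝ) : 0 ≤ gg θ u := by
  unfold gg
  rw [Complex.log_im, Complex.arg_nonneg_iff]
  have h := Real.sin_pos_of_pos_of_lt_pi hθ hθπ
  have := Real.exp_pos u
  simp [Complex.exp_im]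
  positivity

lemma gg_strictMono {θ : ℝ} (hθ : 0 < θ) (hθπ : θ < Real.pi) : StrictMono (gg θ) := by
  apply strictMono_of_deriv_pos
  intro u
  rw [(gg_deriv hθ hθπ u).deriv]
  exact mul_pos (Real.sin_pos_of_pos_of_lt_pi hθ hθπ) (kap_pos hθ hθπ u)

/-- first-order comparison, both orientations -/
lemma gg_lower {θ B : ℝ} (hθ : 0 < θ) (hθπ : θ < Real.pi)
    (hB : 0 < B) (hlip : ∀ u x, kap θ (u + x) ≤ Real.exp (B * |x|) * kap θ u) (u x : ℝ) :
    gg θ u + Real.sin θ * (kap θ u * (x * Real.exp (-(B * x)))) ≤ gg θ (u + x) ∧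
    gg θ (u - x) ≤ gg θ u - Real.sin θ * (kap θ u * (x * Real.exp (-(B * x)))) := by
  have hs := Real.sin_pos_of_pos_of_lt_pi hθ hθπ
  have key : ∀ ξ, |ξ - u| ≤ |x| → kap θ u * (x * Real.exp (-(B * x))) ≤ kap θ ξ * x := by
    intro ξ hξ
    have hku := kap_pos hθ hθπ u
    rcases le_total 0 x with hx | hx
    · have h1 := hlip ξ (u - ξ)
      rw [add_sub_cancel] at h1
      have h2 : Real.exp (B * |u - ξ|) ≤ Real.exp (B * x) := by
        rw [abs_sub_comm]
        rw [abs_of_nonneg hx] at hξ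
        exact Real.exp_le_exp.2 (mul_le_mul_of_nonneg_left hξ hB.le)
      have h3 : kap θ u ≤ Real.exp (B * x) * kap θ ξ :=
        h1.trans (mul_le_mul_of_nonneg_right h2 (kap_pos hθ hθπ ξ).le)
      have h4 : kap θ u * Real.exp (-(B * x)) ≤ kap θ ξ := by
        rw [Real.exp_neg, ← div_eq_mul_inv, div_le_iff₀ (Real.exp_pos _)]; linarith
      nlinarith
    · have h1 := hlip u (ξ - u)
      rw [add_sub_cancel] at h1
      have h2 : Real.exp (B * |ξ - u|) ≤ Real.exp (-(B * x)) := by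
        rw [abs_of_nonpos hx] at hξ
        apply Real.exp_le_exp.2; nlinarith
      have h3 : kap θ ξ ≤ kap θ u * Real.exp (-(B * x)) := by
        rw [mul_comm]
        exact h1.trans (mul_le_mul_of_nonneg_right h2 hku.le)
      nlinarith
  have mvt : ∀ a b : ℝ, ∃ ξ, |ξ - a| ≤ |b - a| ∧ gg θ b - gg θ a = Real.sin θ * kap θ ξ * (b - a) := by
    intro a b
    rcases lt_trichotomy a b with h | h | h
    · obtain ⟨ξ, hξ, e⟩ := exists_hasDerivAt_eq_slope (gg θ) (fun u => Real.sin θ * kap θ u) h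
        (fun y _ => (gg_deriv hθ hθπ y).continuousAt.continuousWithinAt) (fun y _ => gg_deriv hθ hθπ y)
      refine ⟨ξ, ?_, ?_⟩
      · rw [abs_of_pos (by linarith [hξ.1]), abs_of_pos (by linarith)]; linarith [hξ.2]
      · rw [e, div_mul_cancel₀ _ (by linarith)]
    · exact ⟨a, by simp, by simp [h]⟩
    · obtain ⟨ξ, hξ, e⟩ := exists_hasDerivAt_eq_slope (gg θ) (fun u => Real.sin θ * kap θ u) h
        (fun y _ => (gg_deriv hθ hθπ y).continuousAt.continuousWithinAt) (fun y _ => gg_deriv hθ hθπ y)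
      refine ⟨ξ, ?_, ?_⟩
      · rw [abs_of_neg (by linarith [hξ.2]), abs_of_neg (by linarith)]; linarith [hξ.1]
      · rw [e, div_mul_eq_mul_div, eq_div_iff (by linarith)]; ring
  constructor
  · obtain ⟨ξ, h1, h2⟩ := mvt u (u + x)
    rw [add_sub_cancel_left] at h1 h2
    have := mul_le_mul_of_nonneg_left (key ξ h1) hs.le
    linarith
  · obtain ⟨ξ, h1, h2⟩ := mvt u (u - x)
    rw [sub_sub_cancel_left, abs_neg] at h1
    have := mul_le_mul_of_nonneg_left (key ξ h1) hs.le
    rw [sub_sub_cancel_left] at h2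
    linarith

lemma phi_hasSum {θ : ℝ} (hθ : 0 < θ) (hθπ : θ < Real.pi) (X Y : ℕ → ℝ) (q : ℝ) (hq : 0 < q) (j : ℕ)
    (hX : ∀ k, 1 ≤ k → 0 < X k) (hY : 0 < Y j) (h : phi θ X Y j = ENNReal.ofReal q) :
    HasSum (fun k : ℕ => gg θ (Real.log (Y j) - Real.log (X (k + 1)))) (Real.pi * q) := by
  unfold phi at h
  have e : ∀ k : ℕ, Theta θ (X (k + 1)) (Y j) = gg θ (Real.log (Y j) - Real.log (X (k + 1))) := by
    intro k
    rw [← Theta_exp, Real.exp_log hY, Real.exp_log (hX _ (by omega))]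
  simp_rw [e] at h
  have hpi := Real.pi_pos
  have hsum : ∑' k : ℕ, ENNReal.ofReal (gg θ (Real.log (Y j) - Real.log (X (k + 1)))) = ENNReal.ofReal (Real.pi * q) := by
    have : ENNReal.ofReal Real.pi * (ENNReal.ofReal (1 / Real.pi) * ∑' k : ℕ, ENNReal.ofReal (gg θ (Real.log (Y j) - Real.log (X (k + 1))))) = ENNReal.ofReal Real.pi * ENNReal.ofReal q := by rw [h]
    rw [← mul_assoc, ← ENNReal.ofReal_mul hpi.le, ← ENNReal.ofReal_mul hpi.le, mul_one_div_cancel hpi.ne', ENNReal.ofReal_one, one_mul] at this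
    exact this
  have hne : ∑' k : ℕ, ENNReal.ofReal (gg θ (Real.log (Y j) - Real.log (X (k + 1)))) ≠ ⊤ := by
    rw [hsum]; exact ENNReal.ofReal_ne_top
  have h1 := ENNReal.hasSum_toReal hne
  rw [← ENNReal.tsum_toReal_eq (fun _ => ENNReal.ofReal_ne_top), hsum, ENNReal.toReal_ofReal (by positivity)] at h1
  simpa only [ENNReal.toReal_ofReal (gg_nonneg hθ hθπ _)] using h1

lemma step {θ B : ℝ} (hθ : 0 < θ) (hθπ : θ < Real.pi)
    (hB : 0 < B) (hlip : ∀ u x, kap θ (u + x) ≤ Real.exp (B * |x|) * kap θ u)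
    (p x a : ℕ → ℝ) (pj yj bj s : ℝ)
    (hp : HasSum (fun k => gg θ (pj - p k)) s) (hy : HasSum (fun k => gg θ (yj - x k)) s)
    (hx : ∀ k, |x k - p k| ≤ a k)
    (hsum : Summable fun k => kap θ (pj - p k) * ((bj - a k) * Real.exp (-(B * (bj - a k)))))
    (hpos : 0 ≤ ∑' k, kap θ (pj - p k) * ((bj - a k) * Real.exp (-(B * (bj - a k))))) :
    |yj - pj| ≤ bj := by
  have hs := Real.sin_pos_of_pos_of_lt_pi hθ hθπ
  have hS := hsum.hasSum.mul_left (Real.sin θ)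
  have hmono := gg_strictMono hθ hθπ
  have hp0 := mul_nonneg hs.le hpos
  rw [abs_le]
  constructor
  · by_contra! hlt
    have h1 := hp.sub hS
    have h2 : ∀ k, gg θ (yj - x k) < gg θ (pj - p k) - Real.sin θ * (kap θ (pj - p k) * ((bj - a k) * Real.exp (-(B * (bj - a k))))) := by
      intro k
      refine lt_of_lt_of_le ?_ (gg_lower hθ hθπ hB hlip (pj - p k) (bj - a k)).2
      apply hmono
      have := (abs_le.1 (hx k)).1
      linarith
    have := hasSum_lt (fun k => (h2 k).le) (h2 0) hy h1
    linarith
  · by_contra! hlt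
    have h1 := hp.add hS
    have h2 : ∀ k, gg θ (pj - p k) + Real.sin θ * (kap θ (pj - p k) * ((bj - a k) * Real.exp (-(B * (bj - a k))))) < gg θ (yj - x k) := by
      intro k
      refine lt_of_le_of_lt (gg_lower hθ hθπ hB hlip (pj - p k) (bj - a k)).1 ?_
      apply hmono
      have := (abs_le.1 (hx k)).2
      linarith
    have := hasSum_lt (fun k => (h2 k).le) (h2 0) h1 hy
    linarith

noncomputable def mm (q s : ℝ) : ℝ :=
  min (Real.exp ((q - 1) * Real.log s)) (Real.exp ((-q - 1) * Real.log s))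

noncomputable def rho (β v : ℝ) : ℝ := Real.exp (β / 2 * |v|) * max 1 (Real.exp (-2 * v))

lemma mm_pos (q s : ℝ) : 0 < mm q s := lt_min (Real.exp_pos _) (Real.exp_pos _)

lemma rho_pos (β v : ℝ) : 0 < rho β v :=
  mul_pos (Real.exp_pos _) (lt_of_lt_of_le one_pos (le_max_left _ _))

lemma mm_anti {q : ℝ} (hq : 0 < q) (hq1 : q < 1) {s t : ℝ} (hs : 0 < s) (hst : s ≤ t) :
    mm q t ≤ mm q s := by
  have h := Real.log_le_log hs hst
  unfold mm
  apply min_le_min <;> apply Real.exp_le_exp.2 <;> nlinarith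

lemma mm_meas (q : ℝ) : Measurable (mm q) := by
  unfold mm
  fun_prop

lemma mm_int {q : ℝ} (hq : 0 < q) : IntegrableOn (mm q) (Set.Ioi 0) := by
  have : Set.Ioi (0:ℝ) = Set.Ioc 0 1 ∪ Set.Ioi 1 := by
    rw [Set.Ioc_union_Ioi_eq_Ioi zero_le_one]
  rw [this]
  apply IntegrableOn.union
  · have h1 : IntegrableOn (fun x : ℝ => x ^ (q - 1)) (Set.Ioc 0 1) := by
      have := (intervalIntegral.intervalIntegrable_rpow' (a := 0) (b := 1) (r := q - 1) (by linarith))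
      rwa [intervalIntegrable_iff_integrableOn_Ioc_of_le zero_le_one] at this
    refine Integrable.mono' h1 (mm_meas q).aestronglyMeasurable ?_
    filter_upwards [ae_restrict_mem measurableSet_Ioc] with x hx
    rw [Real.norm_of_nonneg (mm_pos q x).le, Real.rpow_def_of_pos hx.1, mul_comm]
    exact min_le_left _ _
  · have h1 : IntegrableOn (fun x : ℝ => x ^ (-q - 1)) (Set.Ioi 1) :=
      integrableOn_Ioi_rpow_of_lt (by linarith) one_pos
    refine Integrable.mono' h1 (mm_meas q).aestronglyMeasurable ?_
    filter_upwards [ae_restrict_mem measurableSet_Ioi] with x hx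
    have hx' : (0:ℝ) < x := lt_trans one_pos hx
    rw [Real.norm_of_nonneg (mm_pos q x).le, Real.rpow_def_of_pos hx', mul_comm]
    exact min_le_right _ _

lemma ceil_hasSum1 (F : ℕ → ℝ) (hF : IntegrableOn (fun s : ℝ => F ⌈s⌉₊) (Set.Ioi 0)) :
    HasSum (fun k : ℕ => F (k + 1)) (∫ s in Set.Ioi (0:ℝ), F ⌈s⌉₊) := by
  have hU : Set.Ioi (0:ℝ) = ⋃ k : ℕ, Set.Ioc (k : ℝ) (k + 1) := by
    ext x
    simp only [Set.mem_Ioi, Set.mem_iUnion, Set.mem_Ioc]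
    constructor
    · intro hx
      have h1 : 0 < ⌈x⌉₊ := Nat.ceil_pos.2 hx
      refine ⟨⌈x⌉₊ - 1, ?_, ?_⟩
      · rw [← Nat.lt_ceil]; omega
      · have := Nat.le_ceil x
        have e : ((⌈x⌉₊ - 1 : ℕ) : ℝ) + 1 = (⌈x⌉₊ : ℝ) := by
          rw [Nat.cast_sub (by omega)]; simp
        rw [e]; exact this
    · rintro ⟨k, hk, _⟩
      exact lt_of_le_of_lt (Nat.cast_nonneg k) hk
  rw [hU] at hF ⊢
  have h := hasSum_integral_iUnion (μ := volume) (f := fun s : ℝ => F ⌈s⌉₊)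
    (s := fun k : ℕ => Set.Ioc (k : ℝ) (k + 1)) (fun _ => measurableSet_Ioc) ?_ hF
  · have hk : (fun k : ℕ => F (k + 1)) = fun k : ℕ => ∫ x in Set.Ioc (k : ℝ) (k + 1), F ⌈x⌉₊ := by
     funext k
     have : ∫ x in Set.Ioc (k : ℝ) (k + 1), F ⌈x⌉₊ = ∫ x in Set.Ioc (k : ℝ) (k + 1), F (k + 1) := by
       apply setIntegral_congr_fun measurableSet_Ioc
       intro x hx
       have : ⌈x⌉₊ = k + 1 := by
         rw [Nat.ceil_eq_iff (by omega)]
         constructor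
         · simpa using hx.1
         · push_cast; exact hx.2
       simp only [this]
     rw [this]
     simp
    rw [hk]; exact h
  · intro a b hab
    simp only [Function.onFun]
    rw [Set.disjoint_left]
    intro x hx hy
    have h1 : ((a : ℝ)) < b + 1 := lt_of_lt_of_le hx.1 hy.2
    have h2 : ((b : ℝ)) < a + 1 := lt_of_lt_of_le hy.1 hx.2
    have h3 : a < b + 1 := by exact_mod_cast h1
    have h4 : b < a + 1 := by exact_mod_cast h2
    omega

lemma ceil_hasSum (F : ℕ → ℝ) (j : ℕ) (hj : 1 ≤ j)
    (hF : IntegrableOn (fun s : ℝ => F ⌈(j:ℝ) * s⌉₊) (Set.Ioi 0)) :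
    HasSum (fun k : ℕ => F (k + 1)) (j * ∫ s in Set.Ioi (0:ℝ), F ⌈(j:ℝ) * s⌉₊) := by
  have hj' : (0:ℝ) < j := by exact_mod_cast hj
  have h1 := (integrableOn_Ioi_comp_mul_left_iff (fun s : ℝ => F ⌈s⌉₊) 0 hj').1 hF
  have h2 := integral_comp_mul_left_Ioi (fun s : ℝ => F ⌈s⌉₊) 0 hj'
  rw [mul_zero] at h1 h2
  rw [h2, smul_eq_mul, mul_inv_cancel_left₀ hj'.ne']
  exact ceil_hasSum1 F h1

lemma ceil_dom {q : ℝ} (hq : 0 < q) (hq1 : q < 1) (F : ℕ → ℝ) (j : ℕ) (hj : 1 ≤ j) (C : ℝ) (hC : 0 ≤ C)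
    (hF : ∀ k, 1 ≤ k → |F k| ≤ C * mm q ((k:ℝ) / j)) (s : ℝ) (hs : 0 < s) :
    ‖F ⌈(j:ℝ) * s⌉₊‖ ≤ C * mm q s := by
  have hj' : (0:ℝ) < j := by exact_mod_cast hj
  have h1 : 1 ≤ ⌈(j:ℝ) * s⌉₊ := Nat.ceil_pos.2 (by positivity)
  refine (hF _ h1).trans (mul_le_mul_of_nonneg_left (mm_anti hq hq1 hs ?_) hC)
  rw [le_div_iff₀ hj', mul_comm]
  exact Nat.le_ceil _

lemma ceil_meas (F : ℕ → ℝ) (j : ℕ) : Measurable (fun s : ℝ => F ⌈(j:ℝ) * s⌉₊) :=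
  (measurable_from_nat (f := F)).comp (Nat.measurable_ceil.comp (measurable_const.mul measurable_id))

lemma ceil_int {q : ℝ} (hq : 0 < q) (hq1 : q < 1) (F : ℕ → ℝ) (j : ℕ) (hj : 1 ≤ j) (C : ℝ) (hC : 0 ≤ C)
    (hF : ∀ k, 1 ≤ k → |F k| ≤ C * mm q ((k:ℝ) / j)) :
    IntegrableOn (fun s : ℝ => F ⌈(j:ℝ) * s⌉₊) (Set.Ioi 0) := by
  refine Integrable.mono' ((mm_int hq).const_mul C) (ceil_meas F j).aestronglyMeasurable ?_
  filter_upwards [ae_restrict_mem measurableSet_Ioi] with x hx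
  exact ceil_dom hq hq1 F j hj C hC hF x hx

lemma ceil_bound {q : ℝ} (hq : 0 < q) (hq1 : q < 1) (F : ℕ → ℝ) (j : ℕ) (hj : 1 ≤ j) (C : ℝ) (hC : 0 ≤ C)
    (hF : ∀ k, 1 ≤ k → |F k| ≤ C * mm q ((k:ℝ) / j)) :
    Summable (fun k : ℕ => F (k + 1)) ∧
      |∑' k : ℕ, F (k + 1)| ≤ (∫ s in Set.Ioi (0:ℝ), mm q s) * C * j := by
  have hI := ceil_int hq hq1 F j hj C hC hF
  have hS := ceil_hasSum F j hj hI
  refine ⟨hS.summable, ?_⟩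
  rw [hS.tsum_eq, abs_mul, Nat.abs_cast, mul_comm]
  apply mul_le_mul_of_nonneg_right _ (Nat.cast_nonneg j)
  have := norm_integral_le_of_norm_le ((mm_int hq).const_mul C) (f := fun s : ℝ => F ⌈(j:ℝ) * s⌉₊) (by
    filter_upwards [ae_restrict_mem measurableSet_Ioi] with x hx
    exact ceil_dom hq hq1 F j hj C hC hF x hx)
  rw [integral_const_mul, mul_comm] at this
  exact this

lemma rho_mm (β v : ℝ) (hβ : 0 < β) :
    Real.exp (-((1 + β) * |v|)) * rho β v ≤ min (Real.exp ((β / 2 - 1) * v)) (Real.exp ((-(β / 2) - 1) * v)) := by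
  unfold rho
  rcases le_total 0 v with h | h
  · rw [abs_of_nonneg h, max_eq_left (Real.exp_le_one_iff.2 (by linarith)), mul_one, ← Real.exp_add]
    apply le_min <;> apply Real.exp_le_exp.2 <;> nlinarith
  · rw [abs_of_nonpos h, max_eq_right (Real.one_le_exp (by linarith)), ← Real.exp_add, ← Real.exp_add]
    apply le_min <;> apply Real.exp_le_exp.2 <;> nlinarith

lemma wU {θ : ℝ} (hθ : 0 < θ) (hθπ : θ < Real.pi) (p : ℕ → ℝ)
    (hp : Tendsto (fun k : ℕ => p k - (1 + θ / Real.pi) * Real.log k) atTop (𝓝 0)) :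
    ∃ C, 0 < C ∧ ∀ j k : ℕ, 1 ≤ j → 1 ≤ k →
      kap θ (p j - p k) * rho (θ / Real.pi) (Real.log ((k:ℝ) / j)) ≤ C * mm (θ / Real.pi / 2) ((k:ℝ) / j) := by
  obtain ⟨O, hO⟩ := (Metric.isBounded_range_of_tendsto _ hp).exists_norm_le
  obtain ⟨C, hC, hk⟩ := kap_le hθ hθπ
  have hβ : 0 < θ / Real.pi := div_pos hθ Real.pi_pos
  refine ⟨C * Real.exp (2 * O), by positivity, fun j k hj hk1 => ?_⟩
  have hj' : (0:ℝ) < j := by exact_mod_cast hj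
  have hk' : (0:ℝ) < k := by exact_mod_cast hk1
  set β := θ / Real.pi
  have hlog : Real.log ((k:ℝ) / j) = Real.log k - Real.log j := Real.log_div hk'.ne' hj'.ne'
  have h1 : (1 + β) * |Real.log ((k:ℝ) / j)| - 2 * O ≤ |p j - p k| := by
    have a1 := hO _ ⟨j, rfl⟩
    have a2 := hO _ ⟨k, rfl⟩
    rw [Real.norm_eq_abs] at a1 a2
    rw [abs_le] at a1 a2
    have h0 : (1 + β) * |Real.log k - Real.log j| = |(1 + β) * (Real.log k - Real.log j)| := by
      rw [abs_mul, abs_of_pos (show 0 < 1 + β by linarith)]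
    rw [hlog, h0]
    have h3 := le_abs_self (p j - p k)
    have h4 := neg_abs_le (p j - p k)
    have : |(1 + β) * (Real.log k - Real.log j)| ≤ |p j - p k| + 2 * O := by
      rw [abs_le]
      constructor <;> linarith
    linarith
  have h2 : kap θ (p j - p k) ≤ C * Real.exp (2 * O) * Real.exp (-((1 + β) * |Real.log ((k:ℝ) / j)|)) := by
    refine (hk _).trans ?_
    rw [mul_assoc, ← Real.exp_add]
    apply mul_le_mul_of_nonneg_left _ hC.le
    apply Real.exp_le_exp.2; linarith
  refine (mul_le_mul_of_nonneg_right h2 (rho_pos _ _).le).trans ?_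
  rw [mul_assoc]
  exact mul_le_mul_of_nonneg_left (rho_mm β _ hβ) (by positivity)

lemma wBound {θ : ℝ} (hθ : 0 < θ) (hθπ : θ < Real.pi) (p : ℕ → ℝ)
    (hp : Tendsto (fun k : ℕ => p k - (1 + θ / Real.pi) * Real.log k) atTop (𝓝 0)) :
    ∃ M, 0 < M ∧ ∀ j : ℕ, 1 ≤ j → ∀ (f : ℕ → ℝ) (c : ℝ), 0 ≤ c →
      (∀ k, 1 ≤ k → |f k| ≤ c * rho (θ / Real.pi) (Real.log ((k:ℝ) / j))) →
      Summable (fun k : ℕ => kap θ (p j - p (k + 1)) * f (k + 1)) ∧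
      |∑' k : ℕ, kap θ (p j - p (k + 1)) * f (k + 1)| ≤ M * c * j := by
  obtain ⟨C, hC, h⟩ := wU hθ hθπ p hp
  have hβ : 0 < θ / Real.pi := div_pos hθ Real.pi_pos
  have hβ1 : θ / Real.pi < 1 := (div_lt_one Real.pi_pos).2 hθπ
  have hI : 0 ≤ ∫ s in Set.Ioi (0:ℝ), mm (θ / Real.pi / 2) s := integral_nonneg (fun s => (mm_pos _ s).le)
  refine ⟨(∫ s in Set.Ioi (0:ℝ), mm (θ / Real.pi / 2) s) * C + 1, by positivity, ?_⟩
  intro j hj f c hc hf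
  have := ceil_bound (q := θ / Real.pi / 2) (by linarith) (by linarith)
    (fun k => kap θ (p j - p k) * f k) j hj (c * C) (by positivity) (by
      intro k hk
      rw [abs_mul, abs_of_pos (kap_pos hθ hθπ _)]
      have h1 := mul_le_mul_of_nonneg_left (hf k hk) (kap_pos hθ hθπ (p j - p k)).le
      have h2 := mul_le_mul_of_nonneg_left (h j k hj hk) hc
      linarith)
  refine ⟨this.1, this.2.trans ?_⟩
  apply mul_le_mul_of_nonneg_right _ (Nat.cast_nonneg j)
  nlinarith

lemma one_sub_exp_le (ε v : ℝ) (h0 : 0 ≤ ε) (h2 : ε ≤ 2) :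
    |1 - Real.exp (-(ε * v))| ≤ ε * |v| * max 1 (Real.exp (-2 * v)) := by
  have h1 := Real.add_one_le_exp (-(ε * v))
  rcases le_total 0 v with h | h
  · have : Real.exp (-(ε * v)) ≤ 1 := Real.exp_le_one_iff.2 (by nlinarith)
    rw [abs_of_nonneg (by linarith), abs_of_nonneg h, max_eq_left (Real.exp_le_one_iff.2 (by linarith))]
    linarith
  · have h3 : 1 ≤ Real.exp (-(ε * v)) := Real.one_le_exp (by nlinarith)
    rw [abs_of_nonpos (by linarith), abs_of_nonpos h, max_eq_right (Real.one_le_exp (by linarith))]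
    have h4 := Real.add_one_le_exp (ε * v)
    have h5 : Real.exp (-(ε * v)) ≤ Real.exp (-2 * v) := Real.exp_le_exp.2 (by nlinarith)
    have h6 : Real.exp (-(ε * v)) * Real.exp (ε * v) = 1 := by rw [← Real.exp_add]; simp
    have h7 : 0 ≤ ε * -v := by nlinarith
    have h8 : 0 < Real.exp (-(ε * v)) := Real.exp_pos _
    nlinarith [mul_le_mul_of_nonneg_left h5 h7, mul_le_mul_of_nonneg_left h4 h8.le]

/-- crude version -/
lemma one_sub_exp_le' (β ε v : ℝ) (hβ : 0 ≤ β) (h0 : 0 ≤ ε) (h2 : ε ≤ 2) :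
    |1 - Real.exp (-(ε * v))| ≤ rho β v := by
  unfold rho
  have e1 : 1 ≤ Real.exp (β / 2 * |v|) := Real.one_le_exp (by positivity)
  have : |1 - Real.exp (-(ε * v))| ≤ max 1 (Real.exp (-2 * v)) := by
    have hp := Real.exp_pos (-(ε * v))
    rw [abs_le]
    constructor
    · rcases le_total 0 v with h | h
      · have : Real.exp (-(ε * v)) ≤ 1 := Real.exp_le_one_iff.2 (by nlinarith)
        have := le_max_left 1 (Real.exp (-2 * v))
        linarith
      · have h5 : Real.exp (-(ε * v)) ≤ Real.exp (-2 * v) := Real.exp_le_exp.2 (by nlinarith)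
        have := le_max_right 1 (Real.exp (-2 * v))
        linarith
    · exact le_trans (by linarith) (le_max_left _ _)
  have h3 : 0 ≤ max 1 (Real.exp (-2 * v)) := le_trans zero_le_one (le_max_left _ _)
  nlinarith

/-- limiting integral positive -/
lemma I_pos {θ : ℝ} (hθ : 0 < θ) (hθπ : θ < Real.pi) (ε : ℝ) (h0 : 0 < ε) (h2 : ε < 2)
    (hInt : IntegrableOn (fun s : ℝ => kap θ ((1 + θ / Real.pi) * Real.log s) * (1 - Real.exp (-(ε * Real.log s)))) (Set.Ioi 0)) :
    0 < ∫ s in Set.Ioi (0:ℝ), kap θ ((1 + θ / Real.pi) * Real.log s) * (1 - Real.exp (-(ε * Real.log s))) := by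
  set f : ℝ → ℝ := fun s => kap θ ((1 + θ / Real.pi) * Real.log s) * (1 - Real.exp (-(ε * Real.log s))) with hf
  have h1 := integral_comp_rpow_Ioi f (p := -1) (by norm_num)
  have hInt2 := (integrableOn_Ioi_comp_rpow_iff f (p := -1) (by norm_num)).2 hInt
  have e : ∀ s ∈ Set.Ioi (0:ℝ), f s + (|(-1:ℝ)| * s ^ ((-1:ℝ) - 1)) • f (s ^ (-1:ℝ)) =
     kap θ ((1 + θ / Real.pi) * Real.log s) * ((1 - Real.exp (-(ε * Real.log s))) * (1 - Real.exp (-((2 - ε) * Real.log s)))) := by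
    intro s hs
    have hs' : 0 < s := hs
    have e1 : s ^ ((-1:ℝ) - 1) = Real.exp (-(2 * Real.log s)) := by
      rw [Real.rpow_def_of_pos hs']; congr 1; ring
    have e2 : Real.log (s ^ (-1:ℝ)) = - Real.log s := by
      rw [Real.log_rpow hs']; ring
    simp only [hf, e1, e2, smul_eq_mul]
    rw [mul_neg, kap_neg, mul_neg, neg_neg]
    have e3 : Real.exp (-(2 * Real.log s)) * Real.exp (ε * Real.log s) = Real.exp (-((2 - ε) * Real.log s)) := by
      rw [← Real.exp_add]; congr 1; ring
    have e4 : Real.exp (-(ε * Real.log s)) * Real.exp (-((2 - ε) * Real.log s)) = Real.exp (-(2 * Real.log s)) := by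
      rw [← Real.exp_add]; congr 1; ring
    rw [abs_neg, abs_one, one_mul]
    linear_combination (- kap θ ((1 + θ / Real.pi) * Real.log s)) * e3 - kap θ ((1 + θ / Real.pi) * Real.log s) * e4
  have hsum : 2 * ∫ s in Set.Ioi (0:ℝ), f s = ∫ s in Set.Ioi (0:ℝ), (f s + (|(-1:ℝ)| * s ^ ((-1:ℝ) - 1)) • f (s ^ (-1:ℝ))) := by
    rw [integral_add hInt hInt2, h1]; ring
  have hpos : 0 < ∫ s in Set.Ioi (0:ℝ), (f s + (|(-1:ℝ)| * s ^ ((-1:ℝ) - 1)) • f (s ^ (-1:ℝ))) := by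
    have hprod : ∀ v : ℝ, v ≠ 0 → 0 < (1 - Real.exp (-(ε * v))) * (1 - Real.exp (-((2 - ε) * v))) := by
      intro v hv
      rcases lt_or_gt_of_ne hv with h | h
      · apply mul_pos_of_neg_of_neg
        · have : 1 < Real.exp (-(ε * v)) := Real.one_lt_exp_iff.2 (by nlinarith)
          linarith
        · have : 1 < Real.exp (-((2 - ε) * v)) := Real.one_lt_exp_iff.2 (by nlinarith)
          linarith
      · apply mul_pos
        · have : Real.exp (-(ε * v)) < 1 := Real.exp_lt_one_iff.2 (by nlinarith)
          linarith
        · have : Real.exp (-((2 - ε) * v)) < 1 := Real.exp_lt_one_iff.2 (by nlinarith)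
          linarith
    rw [setIntegral_pos_iff_support_of_nonneg_ae]
    · have hsub : Set.Ioi (1:ℝ) ⊆ Function.support (fun s : ℝ => f s + (|(-1:ℝ)| * s ^ ((-1:ℝ) - 1)) • f (s ^ (-1:ℝ))) ∩ Set.Ioi 0 := by
        intro s hs
        have hs' : (0:ℝ) < s := lt_trans one_pos hs
        refine ⟨?_, hs'⟩
        rw [Function.mem_support, e s hs']
        exact (mul_pos (kap_pos hθ hθπ _) (hprod _ (Real.log_pos hs).ne')).ne'
      exact lt_of_lt_of_le (by simp) (measure_mono hsub)
    · filter_upwards [ae_restrict_mem measurableSet_Ioi] with s hs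
      rw [e s hs]
      apply mul_nonneg (kap_pos hθ hθπ _).le
      by_cases h : Real.log s = 0
      · simp [h]
      · exact (hprod _ h).le
    · exact hInt.add hInt2
  linarith

lemma main_lim {θ : ℝ} (hθ : 0 < θ) (hθπ : θ < Real.pi) (p : ℕ → ℝ)
    (hp : Tendsto (fun k : ℕ => p k - (1 + θ / Real.pi) * Real.log k) atTop (𝓝 0))
    (ε : ℝ) (h0 : 0 < ε) (h2 : ε < 2) :
    ∃ c, 0 < c ∧ ∃ j0 : ℕ, ∀ j : ℕ, j0 ≤ j → 1 ≤ j →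
      c * j ≤ ∑' k : ℕ, kap θ (p j - p (k + 1)) * (1 - Real.exp (-(ε * Real.log (((k + 1 : ℕ):ℝ) / j)))) := by
  obtain ⟨C, hC, h⟩ := wU hθ hθπ p hp
  have hβ : 0 < θ / Real.pi := div_pos hθ Real.pi_pos
  have hβ1 : θ / Real.pi < 1 := (div_lt_one Real.pi_pos).2 hθπ
  set α := 1 + θ / Real.pi with hα
  set q := θ / Real.pi / 2 with hq
  let F : ℕ → ℕ → ℝ := fun j k => kap θ (p j - p k) * (1 - Real.exp (-(ε * Real.log ((k:ℝ) / j))))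
  have hF : ∀ j, 1 ≤ j → ∀ k, 1 ≤ k → |F j k| ≤ C * mm q ((k:ℝ) / j) := by
    intro j hj k hk
    simp only [F]
    rw [abs_mul, abs_of_pos (kap_pos hθ hθπ _)]
    exact (mul_le_mul_of_nonneg_left (one_sub_exp_le' _ _ _ hβ.le h0.le h2.le) (kap_pos hθ hθπ _).le).trans (h j k hj hk)
  set f : ℝ → ℝ := fun s => kap θ (α * Real.log s) * (1 - Real.exp (-(ε * Real.log s))) with hf
  have hlim : ∀ s : ℝ, 0 < s → Tendsto (fun j : ℕ => F j ⌈(j:ℝ) * s⌉₊) atTop (𝓝 (f s)) := by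
    intro s hs
    have t1 : Tendsto (fun j : ℕ => ((⌈(j:ℝ) * s⌉₊ : ℝ)) / j) atTop (𝓝 s) := by
      have := (tendsto_nat_ceil_mul_div_atTop hs.le).comp (tendsto_natCast_atTop_atTop (R := ℝ))
      refine this.congr (fun j => ?_)
      simp [mul_comm]
    have t2 : Tendsto (fun j : ℕ => Real.log ((⌈(j:ℝ) * s⌉₊ : ℝ) / j)) atTop (𝓝 (Real.log s)) :=
      (Real.continuousAt_log hs.ne').tendsto.comp t1
    have t3 : Tendsto (fun j : ℕ => ⌈(j:ℝ) * s⌉₊) atTop atTop := by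
      refine tendsto_nat_ceil_atTop.comp ?_
      exact (tendsto_natCast_atTop_atTop (R := ℝ)).atTop_mul_const hs
    have t4 := hp.sub (hp.comp t3)
    have t5 : Tendsto (fun j : ℕ => p j - p ⌈(j:ℝ) * s⌉₊) atTop (𝓝 (-(α * Real.log s))) := by
      have := t4.sub (t2.const_mul α)
      rw [sub_self, zero_sub] at this
      refine this.congr' ?_
      filter_upwards [eventually_ge_atTop 1] with j hj
      have hj' : (0:ℝ) < j := by exact_mod_cast hj
      have h1 : (0:ℝ) < (⌈(j:ℝ) * s⌉₊ : ℝ) := by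
        exact_mod_cast Nat.ceil_pos.2 (mul_pos hj' hs)
      rw [Real.log_div h1.ne' hj'.ne']
      simp only [Function.comp]
      ring
    have t6 := ((kap_cont hθ hθπ).tendsto _).comp t5
    rw [kap_neg] at t6
    refine t6.mul (tendsto_const_nhds.sub ?_)
    exact (Real.continuous_exp.tendsto _).comp (t2.const_mul ε).neg
  have hbound : ∀ j, 1 ≤ j → ∀ s, 0 < s → ‖F j ⌈(j:ℝ) * s⌉₊‖ ≤ C * mm q s := fun j hj s hs =>
    ceil_dom (by linarith) (by linarith) (F j) j hj C hC.le (hF j hj) s hs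
  have hfint : IntegrableOn f (Set.Ioi 0) := by
    refine Integrable.mono' ((mm_int (q := q) (by linarith)).const_mul C) ?_ ?_
    · apply Measurable.aestronglyMeasurable
      have := (kap_cont hθ hθπ).measurable
      simp only [hf]
      fun_prop
    · filter_upwards [ae_restrict_mem measurableSet_Ioi] with s hs
      refine le_of_tendsto (hlim s hs).norm ?_
      filter_upwards [eventually_ge_atTop 1] with j hj
      exact hbound j hj s hs
  have hIpos := I_pos hθ hθπ ε h0 h2 hfint
  have hT : Tendsto (fun j : ℕ => ∫ s in Set.Ioi (0:ℝ), F j ⌈(j:ℝ) * s⌉₊) atTop (𝓝 (∫ s in Set.Ioi (0:ℝ), f s)) := by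
    refine tendsto_integral_filter_of_dominated_convergence (fun s => C * mm q s) ?_ ?_ ((mm_int (q := q) (by linarith)).const_mul C) ?_
    · exact Eventually.of_forall fun j => (ceil_meas (F j) j).aestronglyMeasurable
    · filter_upwards [eventually_ge_atTop 1] with j hj
      filter_upwards [ae_restrict_mem measurableSet_Ioi] with s hs
      exact hbound j hj s hs
    · filter_upwards [ae_restrict_mem measurableSet_Ioi] with s hs
      exact hlim s hs
  refine ⟨(∫ s in Set.Ioi (0:ℝ), f s) / 2, by simp only [hf]; linarith, ?_⟩
  have hev := hT.eventually (lt_mem_nhds (show (∫ s in Set.Ioi (0:ℝ), f s) / 2 < ∫ s in Set.Ioi (0:ℝ), f s by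
    simp only [hf]; linarith))
  obtain ⟨j0, hj0⟩ := eventually_atTop.1 hev
  refine ⟨j0, fun j hj hj1 => ?_⟩
  have := (ceil_hasSum (F j) j hj1 (ceil_int (by linarith) (by linarith) (F j) j hj1 C hC.le (hF j hj1))).tsum_eq
  simp only [F] at this
  rw [this, mul_comm]
  exact mul_le_mul_of_nonneg_left (hj0 j hj).le (Nat.cast_nonneg j)

noncomputable def hh (N : ℕ) (ε : ℝ) (k : ℕ) : ℝ :=
  Real.exp (-(ε * max 0 (Real.log ((k:ℝ) / N))))

lemma hh_pos (N : ℕ) (ε : ℝ) (k : ℕ) : 0 < hh N ε k := Real.exp_pos _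

lemma hh_le_one (N : ℕ) {ε : ℝ} (hε : 0 ≤ ε) (k : ℕ) : hh N ε k ≤ 1 := by
  unfold hh
  apply Real.exp_le_one_iff.2
  have := le_max_left 0 (Real.log ((k:ℝ) / N))
  nlinarith

lemma rho_ge_one {β : ℝ} (hβ : 0 ≤ β) (v : ℝ) : 1 ≤ rho β v := by
  unfold rho
  have e1 : 1 ≤ Real.exp (β / 2 * |v|) := Real.one_le_exp (by positivity)
  have := le_max_left 1 (Real.exp (-2 * v))
  nlinarith

lemma exp_lip (x y : ℝ) (hx : 0 ≤ x) (hy : 0 ≤ y) : |Real.exp (-x) - Real.exp (-y)| ≤ |x - y| := by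
  wlog h : x ≤ y generalizing x y
  · rw [abs_sub_comm, abs_sub_comm x y]; exact this y x hy hx (by linarith)
  have h1 : Real.exp (-y) ≤ Real.exp (-x) := Real.exp_le_exp.2 (by linarith)
  rw [abs_of_nonneg (by linarith), abs_of_nonpos (by linarith)]
  have h2 := Real.add_one_le_exp (x - y)
  have h3 : Real.exp (-y) = Real.exp (-x) * Real.exp (x - y) := by rw [← Real.exp_add]; congr 1; ring
  have h4 : Real.exp (-x) ≤ 1 := Real.exp_le_one_iff.2 (by linarith)
  have h5 := Real.exp_pos (-x)
  rw [h3]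
  nlinarith

lemma exp_conc (ε ε0 v : ℝ) (h0 : 0 < ε) (h : ε ≤ ε0) :
    ε / ε0 * (1 - Real.exp (-(ε0 * v))) ≤ 1 - Real.exp (-(ε * v)) := by
  have hε0 : 0 < ε0 := by linarith
  have h1 : ε / ε0 ≤ 1 := (div_le_one hε0).2 h
  have := convexOn_exp.2 (Set.mem_univ (0:ℝ)) (Set.mem_univ (-(ε0 * v)))
    (show 0 ≤ 1 - ε / ε0 by linarith) (show 0 ≤ ε / ε0 by positivity) (by ring)
  simp only [smul_eq_mul, mul_zero, zero_add, Real.exp_zero, mul_one] at this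
  have e : ε / ε0 * -(ε0 * v) = -(ε * v) := by field_simp
  rw [e] at this
  linarith

lemma exp_sub_one_le (x : ℝ) : Real.exp x - 1 ≤ x * Real.exp x := by
  have h1 := Real.add_one_le_exp (-x)
  have h2 : Real.exp x * Real.exp (-x) = 1 := by rw [← Real.exp_add]; simp
  have := Real.exp_pos x
  nlinarith

lemma dexp_lower (A d D : ℝ) (hA : 0 ≤ A) (hd : |d| ≤ D) :
    -(|d| * (Real.exp (A * D) - 1)) ≤ d * Real.exp (-(A * d)) - d := by
  have h1 : |Real.exp (-(A * d)) - 1| ≤ Real.exp (A * D) - 1 := by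
    have hD : 0 ≤ D := (abs_nonneg d).trans hd
    have := abs_le.1 hd
    have a1 : Real.exp (-(A * d)) ≤ Real.exp (A * D) := Real.exp_le_exp.2 (by nlinarith)
    have a2 : Real.exp (-(A * D)) ≤ Real.exp (-(A * d)) := Real.exp_le_exp.2 (by nlinarith)
    have a3 := Real.add_one_le_exp (-(A * D))
    have a4 := Real.add_one_le_exp (A * D)
    rw [abs_le]
    constructor <;> linarith
  have h2 : |d * (Real.exp (-(A * d)) - 1)| ≤ |d| * (Real.exp (A * D) - 1) := by
    rw [abs_mul]; exact mul_le_mul_of_nonneg_left h1 (abs_nonneg d)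
  have := (abs_le.1 h2).1
  linarith

lemma poly_exp (β κ x : ℝ) (hβ : 0 < β) (hβ1 : β ≤ 1) (hκ : κ ≤ β / 8) (hx : 0 ≤ x) :
    (1 + x) ^ 2 * Real.exp (1 + κ * x) ≤ (64 * Real.exp 1 / β ^ 2) * Real.exp (β / 2 * x) := by
  have h1 : β / 8 * (1 + x) ≤ Real.exp (β / 8 * x) := by
    have := Real.add_one_le_exp (β / 8 * x); nlinarith
  have h2 : (β / 8 * (1 + x)) ^ 2 ≤ Real.exp (β / 8 * x) ^ 2 := by
    apply pow_le_pow_left₀ (by positivity) h1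
  have h3 : Real.exp (β / 8 * x) ^ 2 = Real.exp (β / 4 * x) := by
    rw [← Real.exp_nat_mul]; congr 1; push_cast; ring
  have h4 : (1 + x) ^ 2 ≤ 64 / β ^ 2 * Real.exp (β / 4 * x) := by
    rw [h3] at h2
    rw [div_mul_eq_mul_div, le_div_iff₀ (by positivity)]
    nlinarith
  calc (1 + x) ^ 2 * Real.exp (1 + κ * x) ≤ (64 / β ^ 2 * Real.exp (β / 4 * x)) * Real.exp (1 + κ * x) :=
        mul_le_mul_of_nonneg_right h4 (Real.exp_pos _).le
    _ = (64 / β ^ 2) * Real.exp (β / 4 * x + (1 + κ * x)) := by rw [mul_assoc, ← Real.exp_add]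
    _ ≤ (64 / β ^ 2) * Real.exp (1 + β / 2 * x) := by
        apply mul_le_mul_of_nonneg_left _ (by positivity)
        apply Real.exp_le_exp.2; nlinarith
    _ = _ := by rw [Real.exp_add]; ring

lemma scalar (β ε A μ κ b v : ℝ) (hβ : 0 < β) (hβ1 : β ≤ 1) (hε : 0 < ε) (hε2 : ε ≤ 2) (hA : 0 < A)
    (hμ : 0 ≤ μ) (hμ1 : μ ≤ 1) (hAμ : A * μ ≤ 1) (hAε : A * ε ≤ κ) (hκ : κ ≤ β / 8) (hb : 0 ≤ b) :
    Real.exp (-(ε * b)) * ((1 - Real.exp (-(ε * v))) -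
      (1 + 64 * Real.exp 1 / β ^ 2) * (μ + ε * (A * μ + κ)) * rho β v) ≤
    ((1 - μ) * Real.exp (-(ε * b)) - Real.exp (-(ε * max 0 (b + v)))) *
      Real.exp (-(A * ((1 - μ) * Real.exp (-(ε * b)) - Real.exp (-(ε * max 0 (b + v)))))) := by
  set H := Real.exp (-(ε * b)) with hH
  set K := Real.exp (-(ε * max 0 (b + v))) with hK
  set d := (1 - μ) * H - K with hd
  have hκ0 : 0 < κ := lt_of_lt_of_le (by positivity) hAε
  have hHpos : 0 < H := Real.exp_pos _
  have hH1 : H ≤ 1 := Real.exp_le_one_iff.2 (by nlinarith)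
  have hv := abs_nonneg v
  -- distance
  have hHK : |H - K| ≤ ε * |v| := by
    refine (exp_lip _ _ (by positivity) (by positivity)).trans ?_
    rw [← mul_sub, abs_mul, abs_of_pos hε]
    apply mul_le_mul_of_nonneg_left _ hε.le
    have := abs_max_sub_max_le_abs b (b + v) 0
    rw [max_eq_left hb, max_comm] at this
    simpa using this
  have hdabs : |d| ≤ μ + ε * |v| := by
    have : d = (H - K) - μ * H := by rw [hd]; ring
    rw [this]
    refine (abs_sub _ _).trans ?_
    rw [abs_of_nonneg (show 0 ≤ μ * H by positivity)]
    nlinarith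
  -- relative
  have hKup : K ≤ H * Real.exp (-(ε * v)) := by
    rw [hH, hK, ← Real.exp_add]
    apply Real.exp_le_exp.2
    have := le_max_right 0 (b + v)
    nlinarith
  have hHK2 : |H - K| ≤ H * |1 - Real.exp (-(ε * v))| := by
    rw [abs_le]
    constructor
    · have := neg_abs_le (1 - Real.exp (-(ε * v)))
      nlinarith
    · rcases le_total 0 v with h | h
      · have e : K = H * Real.exp (-(ε * v)) := by
          rw [hH, hK, ← Real.exp_add, max_eq_right (by linarith)]; congr 1; ring
        rw [e]
        have := le_abs_self (1 - Real.exp (-(ε * v)))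
        nlinarith
      · have : H ≤ K := by
          apply Real.exp_le_exp.2
          have : max 0 (b + v) ≤ b := max_le hb (by linarith)
          nlinarith
        have := mul_nonneg hHpos.le (abs_nonneg (1 - Real.exp (-(ε * v))))
        linarith
  set m := max 1 (Real.exp (-2 * v)) with hm
  have hm1 : 1 ≤ m := le_max_left _ _
  have hexp := one_sub_exp_le ε v hε.le hε2
  rw [← hm] at hexp
  have hdabs2 : |d| ≤ H * (μ + ε * |v| * m) := by
    have : d = (H - K) - μ * H := by rw [hd]; ring
    rw [this]
    refine (abs_sub _ _).trans ?_
    rw [abs_of_nonneg (show 0 ≤ μ * H by positivity)]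
    nlinarith
  have hdlow : H * (1 - Real.exp (-(ε * v)) - μ) ≤ d := by rw [hd]; nlinarith
  have h1 := dexp_lower A d _ hA.le hdabs
  have h2 : Real.exp (A * (μ + ε * |v|)) - 1 ≤ (A * μ + κ * |v|) * Real.exp (1 + κ * |v|) := by
    refine (exp_sub_one_le _).trans ?_
    have : A * (μ + ε * |v|) ≤ A * μ + κ * |v| := by nlinarith
    apply mul_le_mul this (Real.exp_le_exp.2 (by linarith)) (Real.exp_pos _).le (by positivity)
  have h3 : |d| * (Real.exp (A * (μ + ε * |v|)) - 1) ≤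
      H * ((μ + ε * |v| * m) * ((A * μ + κ * |v|) * Real.exp (1 + κ * |v|))) := by
    rw [← mul_assoc H]
    apply mul_le_mul hdabs2 h2
    · have := Real.one_le_exp (show 0 ≤ A * (μ + ε * |v|) by positivity)
      linarith
    · positivity
  have h4 : (μ + ε * |v| * m) * (A * μ + κ * |v|) ≤ (μ + ε * (A * μ + κ)) * m * (1 + |v|) ^ 2 := by
    have a1 : A * μ + κ * |v| ≤ 1 + |v| := by nlinarith
    have a2 : A * μ + κ * |v| ≤ (A * μ + κ) * (1 + |v|) := by
      have : 0 ≤ A * μ := by positivity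
      nlinarith
    have b1 : μ * (A * μ + κ * |v|) ≤ μ * m * (1 + |v|) ^ 2 := by
      have : μ * (A * μ + κ * |v|) ≤ μ * (1 + |v|) := mul_le_mul_of_nonneg_left a1 hμ
      have c1 : μ * (1 + |v|) ≤ μ * (m * (1 + |v|) ^ 2) := by
        apply mul_le_mul_of_nonneg_left _ hμ
        nlinarith [mul_nonneg hv hv]
      linarith
    have b2 : ε * |v| * m * (A * μ + κ * |v|) ≤ ε * (A * μ + κ) * m * (1 + |v|) ^ 2 := by
      have c0 : 0 ≤ A * μ + κ := by positivity
      have c1 : |v| * (A * μ + κ * |v|) ≤ (1 + |v|) * ((A * μ + κ) * (1 + |v|)) :=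
        mul_le_mul (by linarith) a2 (by positivity) (by positivity)
      have := mul_le_mul_of_nonneg_left c1 (show 0 ≤ ε * m by positivity)
      linarith
    linarith
  have h5 := poly_exp β κ |v| hβ hβ1 hκ hv
  have h6 : (μ + ε * |v| * m) * ((A * μ + κ * |v|) * Real.exp (1 + κ * |v|)) ≤
      (μ + ε * (A * μ + κ)) * (64 * Real.exp 1 / β ^ 2) * rho β v := by
    have a1 := mul_le_mul_of_nonneg_right h4 (Real.exp_pos (1 + κ * |v|)).le
    have a2 := mul_le_mul_of_nonneg_left h5 (show 0 ≤ (μ + ε * (A * μ + κ)) * m by positivity)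
    have e : rho β v = Real.exp (β / 2 * |v|) * m := rfl
    rw [e]
    linarith
  have h7 : μ ≤ (μ + ε * (A * μ + κ)) * rho β v := by
    have a0 := rho_ge_one hβ.le v
    have a1 : 0 ≤ ε * (A * μ + κ) := by positivity
    have a2 : 0 ≤ μ + ε * (A * μ + κ) := by positivity
    have a3 := le_mul_of_one_le_right a2 a0
    linarith
  have h8 := mul_le_mul_of_nonneg_left h6 hHpos.le
  have h9 := mul_le_mul_of_nonneg_left h7 hHpos.le
  linarith

lemma dexp_abs (A d : ℝ) (hA : 0 ≤ A) (hd : |d| ≤ 1) : |d * Real.exp (-(A * d))| ≤ Real.exp A := by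
  rw [abs_mul, Real.abs_exp]
  have := abs_le.1 hd
  have a1 : Real.exp (-(A * d)) ≤ Real.exp A := Real.exp_le_exp.2 (by nlinarith)
  have := Real.exp_pos (-(A * d))
  nlinarith [abs_nonneg d]

lemma core {θ : ℝ} (hθ : 0 < θ) (hθπ : θ < Real.pi) (p : ℕ → ℝ)
    (hp : Tendsto (fun k : ℕ => p k - (1 + θ / Real.pi) * Real.log k) atTop (𝓝 0))
    (ε0 : ℝ) (h0 : 0 < ε0) (h2 : ε0 < 2) :
    ∃ κ, 0 < κ ∧ ∃ j0 : ℕ, ∀ ε A : ℝ, 0 < ε → ε ≤ ε0 → 0 < A → A * ε ≤ κ → ∀ N : ℕ, j0 ≤ N → 1 ≤ N →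
      ∃ lam, 0 < lam ∧ lam < 1 ∧ ∀ j : ℕ, 1 ≤ j →
        Summable (fun k : ℕ => kap θ (p j - p (k + 1)) *
          ((lam * hh N ε j - hh N ε (k + 1)) * Real.exp (-(A * (lam * hh N ε j - hh N ε (k + 1)))))) ∧
        0 ≤ ∑' k : ℕ, kap θ (p j - p (k + 1)) *
          ((lam * hh N ε j - hh N ε (k + 1)) * Real.exp (-(A * (lam * hh N ε j - hh N ε (k + 1))))) := by
  obtain ⟨c, hc, j0, hmain⟩ := main_lim hθ hθπ p hp ε0 h0 h2
  obtain ⟨M, hM, hW⟩ := wBound hθ hθπ p hp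
  have hβ : 0 < θ / Real.pi := div_pos hθ Real.pi_pos
  have hβ1 : θ / Real.pi < 1 := (div_lt_one Real.pi_pos).2 hθπ
  set β := θ / Real.pi with hβdef
  set c2 := 1 + 64 * Real.exp 1 / β ^ 2 with hc2
  have hc2pos : 0 < c2 := by positivity
  set κ := min (β / 8) (c / (2 * ε0 * M * c2)) with hκ
  have hκpos : 0 < κ := by rw [hκ]; positivity
  have hκ2 : M * c2 * κ ≤ c / ε0 / 2 := by
    have := min_le_right (β / 8) (c / (2 * ε0 * M * c2))
    rw [← hκ, le_div_iff₀ (by positivity)] at this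
    rw [div_div, le_div_iff₀ (by positivity)]
    linarith
  refine ⟨κ, hκpos, j0, fun ε A hε hεε0 hA hAε N hN hN1 => ?_⟩
  have hsumm : ∀ lam, 0 < lam → lam < 1 → ∀ j : ℕ, 1 ≤ j →
        Summable (fun k : ℕ => kap θ (p j - p (k + 1)) *
          ((lam * hh N ε j - hh N ε (k + 1)) * Real.exp (-(A * (lam * hh N ε j - hh N ε (k + 1)))))) := by
    intro lam hl0 hl1 j hj
    refine (hW j hj (fun k => (lam * hh N ε j - hh N ε k) * Real.exp (-(A * (lam * hh N ε j - hh N ε k)))) (Real.exp A) (Real.exp_pos A).le ?_).1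
    intro k hk
    refine (dexp_abs A _ hA.le ?_).trans (le_mul_of_one_le_right (Real.exp_pos A).le (rho_ge_one hβ.le _))
    have a1 := hh_pos N ε j
    have a2 := hh_pos N ε k
    have a3 := hh_le_one N hε.le j
    have a4 := hh_le_one N hε.le k
    rw [abs_le]
    constructor <;> nlinarith
  have hWs : ∀ j : ℕ, 1 ≤ j → Summable (fun k : ℕ => kap θ (p j - p (k + 1))) := by
    intro j hj
    have := (hW j hj (fun _ => 1) 1 zero_le_one (fun k hk => by
      rw [abs_one, one_mul]; exact rho_ge_one hβ.le _)).1
    simpa using this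
  have hNpos : (0:ℝ) < N := by exact_mod_cast hN1
  -- small `j`
  have hsmall : ∀ j ∈ Finset.Icc 1 N, ∀ᶠ lam in 𝓝[<] (1:ℝ), 
        0 ≤ ∑' k : ℕ, kap θ (p j - p (k + 1)) *
          ((lam * hh N ε j - hh N ε (k + 1)) * Real.exp (-(A * (lam * hh N ε j - hh N ε (k + 1))))) := by
    intro j hj
    rw [Finset.mem_Icc] at hj
    have hjpos : (0:ℝ) < j := by exact_mod_cast hj.1
    have hj1 : hh N ε j = 1 := by
      unfold hh
      rw [max_eq_left, mul_zero, neg_zero, Real.exp_zero]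
      apply Real.log_nonpos (by positivity)
      rw [div_le_one hNpos]; exact_mod_cast hj.2
    obtain ⟨k0, hk0⟩ : ∃ k0 : ℕ, hh N ε (k0 + 1) ≤ 1 / 2 := by
      obtain ⟨k0, hk0⟩ := exists_nat_ge (N * Real.exp (Real.log 2 / ε))
      refine ⟨k0, ?_⟩
      have h1 : Real.log 2 / ε ≤ Real.log (((k0 + 1 : ℕ):ℝ) / N) := by
        rw [Real.le_log_iff_exp_le (by positivity), le_div_iff₀ hNpos]
        push_cast; linarith
      have h2 := h1.trans (le_max_right 0 _)
      unfold hh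
      have h3 : Real.exp (-Real.log 2) = 1 / 2 := by rw [Real.exp_neg, Real.exp_log (by norm_num)]; norm_num
      rw [← h3]
      apply Real.exp_le_exp.2
      rw [div_le_iff₀ hε] at h2
      linarith
    set W := ∑' k : ℕ, kap θ (p j - p (k + 1)) with hWdef
    have hev : ∀ᶠ lam in 𝓝[<] (1:ℝ), (1 - lam) * Real.exp A * W < kap θ (p j - p (k0 + 1)) * (1 / 4 * Real.exp (-A)) := by
      have ht : Tendsto (fun lam : ℝ => (1 - lam) * Real.exp A * W) (𝓝[<] 1) (𝓝 ((1 - 1) * Real.exp A * W)) := by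
        refine Tendsto.mono_left (Continuous.tendsto (by fun_prop) 1) nhdsWithin_le_nhds
      refine ht.eventually (gt_mem_nhds ?_)
      rw [sub_self, zero_mul, zero_mul]
      have := kap_pos hθ hθπ (p j - p (k0 + 1))
      positivity
    have hev2 : ∀ᶠ lam in 𝓝[<] (1:ℝ), 3 / 4 < lam := 
      nhdsWithin_le_nhds (lt_mem_nhds (by norm_num))
    filter_upwards [hev, hev2, self_mem_nhdsWithin] with lam e1 e2 e3
    have e3 : lam < 1 := e3
    have hs := hsumm lam (by linarith) e3 j hj.1
    have hlow : HasSum (fun k : ℕ => -((1 - lam) * Real.exp A) * kap θ (p j - p (k + 1)) +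
        (if k = k0 then kap θ (p j - p (k0 + 1)) * (1 / 4 * Real.exp (-A)) else 0))
        (-((1 - lam) * Real.exp A) * W + kap θ (p j - p (k0 + 1)) * (1 / 4 * Real.exp (-A))) :=
      ((hWs j hj.1).hasSum.mul_left _).add (hasSum_ite_eq k0 _)
    have hle := hasSum_le (fun k => ?_) hlow hs.hasSum
    · linarith
    · rw [hj1, mul_one]
      have hw := kap_pos hθ hθπ (p j - p (k + 1))
      have hd1 := hh_pos N ε (k + 1)
      have hd2 := hh_le_one N hε.le (k + 1)
      set d := lam - hh N ε (k + 1) with hd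
      have hdl : -(1 - lam) ≤ d := by rw [hd]; linarith
      have hdu : d ≤ 1 := by rw [hd]; linarith
      split_ifs with hk
      · subst hk
        have hd4 : 1 / 4 ≤ d := by rw [hd]; linarith
        have h5 : Real.exp (-A) ≤ Real.exp (-(A * d)) := Real.exp_le_exp.2 (by nlinarith)
        have h6 : 1 / 4 * Real.exp (-A) ≤ d * Real.exp (-(A * d)) :=
          mul_le_mul hd4 h5 (Real.exp_pos _).le (by linarith)
        have h7 := mul_le_mul_of_nonneg_left h6 hw.le
        have h8 : 0 ≤ (1 - lam) * Real.exp A * kap θ (p j - p (k + 1)) :=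
          mul_nonneg (mul_nonneg (by linarith) (Real.exp_pos _).le) hw.le
        linarith
      · have h6 : -((1 - lam) * Real.exp A) ≤ d * Real.exp (-(A * d)) := by
          rcases le_total 0 d with h | h
          · have := mul_nonneg h (Real.exp_pos (-(A * d))).le
            have := mul_nonneg (show 0 ≤ 1 - lam by linarith) (Real.exp_pos A).le
            linarith
          · have h5 : Real.exp (-(A * d)) ≤ Real.exp A := Real.exp_le_exp.2 (by nlinarith)
            have := mul_le_mul_of_nonneg_left h5 (show 0 ≤ -d by linarith)
            have := mul_le_mul_of_nonneg_right hdl (Real.exp_pos A).le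
            linarith
        have h7 := mul_le_mul_of_nonneg_left h6 hw.le
        linarith
  have hsmall' : ∀ᶠ lam in 𝓝[<] (1:ℝ), ∀ j ∈ Finset.Icc 1 N,
        0 ≤ ∑' k : ℕ, kap θ (p j - p (k + 1)) *
          ((lam * hh N ε j - hh N ε (k + 1)) * Real.exp (-(A * (lam * hh N ε j - hh N ε (k + 1))))) :=
    (Filter.eventually_all_finset _).2 hsmall
  -- large `j`
  have hevL : ∀ᶠ lam in 𝓝[<] (1:ℝ), M * c2 * ((1 - lam) + ε * (A * (1 - lam))) < ε * (c / ε0 / 2) := by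
    have ht : Tendsto (fun lam : ℝ => M * c2 * ((1 - lam) + ε * (A * (1 - lam)))) (𝓝[<] 1)
        (𝓝 (M * c2 * ((1 - 1) + ε * (A * (1 - 1))))) :=
      Tendsto.mono_left (Continuous.tendsto (by fun_prop) 1) nhdsWithin_le_nhds
    refine ht.eventually (gt_mem_nhds ?_)
    simp only [sub_self, mul_zero, add_zero]
    positivity
  have hevA : ∀ᶠ lam in 𝓝[<] (1:ℝ), A * (1 - lam) < 1 := by
    have ht : Tendsto (fun lam : ℝ => A * (1 - lam)) (𝓝[<] 1) (𝓝 (A * (1 - 1))) :=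
      Tendsto.mono_left (Continuous.tendsto (by fun_prop) 1) nhdsWithin_le_nhds
    refine ht.eventually (gt_mem_nhds ?_)
    simp
  have hev0 : ∀ᶠ lam in 𝓝[<] (1:ℝ), 0 < lam := nhdsWithin_le_nhds (lt_mem_nhds (by norm_num))
  obtain ⟨lam, hl1, hl2, hl3, hl4, hl5⟩ :=
    (hsmall'.and (hevL.and (hevA.and (hev0.and self_mem_nhdsWithin)))).exists
  have hl5 : lam < 1 := hl5
  refine ⟨lam, hl4, hl5, fun j hj => ⟨hsumm lam hl4 hl5 j hj, ?_⟩⟩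
  rcases le_or_gt j N with hjN | hjN
  · exact hl1 j (Finset.mem_Icc.2 ⟨hj, hjN⟩)
  have hjpos : (0:ℝ) < j := by exact_mod_cast hj
  have hs := hsumm lam hl4 hl5 j hj
  set b := Real.log ((j:ℝ) / N) with hb
  have hb0 : 0 ≤ b := Real.log_nonneg (by rw [le_div_iff₀ hNpos, one_mul]; exact_mod_cast hjN.le)
  set H := Real.exp (-(ε * b)) with hH
  have hHj : hh N ε j = H := by unfold hh; rw [← hb, max_eq_right hb0]
  set μ := 1 - lam with hμ
  set G := c2 * (μ + ε * (A * μ + κ)) with hG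
  have hG0 : 0 ≤ G := by
    have : 0 ≤ μ := by rw [hμ]; linarith
    positivity
  have hs1 := hW j hj (fun k => 1 - Real.exp (-(ε * Real.log ((k:ℝ) / j)))) 1 zero_le_one (fun k hk => by
    rw [one_mul]; exact one_sub_exp_le' _ _ _ hβ.le hε.le (by linarith))
  have hs0 := hW j hj (fun k => 1 - Real.exp (-(ε0 * Real.log ((k:ℝ) / j)))) 1 zero_le_one (fun k hk => by
    rw [one_mul]; exact one_sub_exp_le' _ _ _ hβ.le h0.le (by linarith))
  have hs2 := hW j hj (fun k => rho β (Real.log ((k:ℝ) / j))) 1 zero_le_one (fun k hk => by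
    rw [one_mul, abs_of_pos (rho_pos _ _)])
  have hterm : ∀ k : ℕ, H * (kap θ (p j - p (k + 1)) * (1 - Real.exp (-(ε * Real.log (((k + 1 : ℕ):ℝ) / j)))) -
      G * (kap θ (p j - p (k + 1)) * rho β (Real.log (((k + 1 : ℕ):ℝ) / j)))) ≤
      kap θ (p j - p (k + 1)) *
          ((lam * hh N ε j - hh N ε (k + 1)) * Real.exp (-(A * (lam * hh N ε j - hh N ε (k + 1))))) := by
    intro k
    have hkpos : (0:ℝ) < ((k + 1 : ℕ):ℝ) := by positivity
    have hsc := scalar β ε A μ κ b (Real.log (((k + 1 : ℕ):ℝ) / j)) hβ hβ1.le hε (by linarith) hA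
      (by rw [hμ]; linarith) (by rw [hμ]; linarith) (by linarith) hAε (min_le_left _ _) hb0
    have e1 : b + Real.log (((k + 1 : ℕ):ℝ) / j) = Real.log (((k + 1 : ℕ):ℝ) / N) := by
      rw [hb, Real.log_div hjpos.ne' hNpos.ne', Real.log_div hkpos.ne' hjpos.ne', Real.log_div hkpos.ne' hNpos.ne']
      ring
    have e2 : Real.exp (-(ε * max 0 (Real.log (((k + 1 : ℕ):ℝ) / N)))) = hh N ε (k + 1) := rfl
    have e3 : 1 - μ = lam := by rw [hμ]; ring
    rw [e1, e2, e3, ← hH] at hsc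
    rw [hHj]
    have := mul_le_mul_of_nonneg_left hsc (kap_pos hθ hθπ (p j - p (k + 1))).le
    rw [← hG] at this
    linarith
  have hle := hasSum_le hterm ((hs1.1.hasSum.sub (hs2.1.hasSum.mul_left G)).mul_left H) hs.hasSum
  refine le_trans ?_ hle
  apply mul_nonneg (Real.exp_pos _).le
  have hm := hmain j (by omega) hj
  have hcmp : ε / ε0 * ∑' k : ℕ, kap θ (p j - p (k + 1)) * (1 - Real.exp (-(ε0 * Real.log (((k + 1 : ℕ):ℝ) / j)))) ≤
      ∑' k : ℕ, kap θ (p j - p (k + 1)) * (1 - Real.exp (-(ε * Real.log (((k + 1 : ℕ):ℝ) / j)))) := by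
    refine hasSum_le (fun k => ?_) (hs0.1.hasSum.mul_left (ε / ε0)) hs1.1.hasSum
    have := mul_le_mul_of_nonneg_left (exp_conc ε ε0 (Real.log (((k + 1 : ℕ):ℝ) / j)) hε hεε0) (kap_pos hθ hθπ (p j - p (k + 1))).le
    linarith
  have hm' := mul_le_mul_of_nonneg_left hm (show 0 ≤ ε / ε0 by positivity)
  have hr := (abs_le.1 hs2.2).2
  rw [mul_one] at hr
  have hr' := mul_le_mul_of_nonneg_left hr hG0
  have hfin : G * (M * j) ≤ ε / ε0 * (c * j) := by
    have e1 : G * M ≤ ε / ε0 * c := by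
      have : ε * (M * c2 * κ) ≤ ε * (c / ε0 / 2) := mul_le_mul_of_nonneg_left hκ2 hε.le
      have e : ε / ε0 * c = ε * (c / ε0 / 2) + ε * (c / ε0 / 2) := by field_simp; ring
      rw [e, hG]
      linarith
    have := mul_le_mul_of_nonneg_right e1 hjpos.le
    linarith
  linarith

lemma oneStep {θ : ℝ} (hθ : 0 < θ) (hθπ : θ < Real.pi) (p : ℕ → ℝ)
    (hp : Tendsto (fun k : ℕ => p k - (1 + θ / Real.pi) * Real.log k) atTop (𝓝 0))
    (ε A : ℝ) (h0 : 0 < ε) (h2 : ε < 2) (hA : 0 < A) :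
    ∃ L : ℝ, 1 ≤ L ∧ ∀ j : ℕ, 1 ≤ j →
        Summable (fun k : ℕ => kap θ (p j - p (k + 1)) *
          ((min 1 (L * hh 1 ε j) - hh 1 ε (k + 1)) * Real.exp (-(A * (min 1 (L * hh 1 ε j) - hh 1 ε (k + 1)))))) ∧
        0 ≤ ∑' k : ℕ, kap θ (p j - p (k + 1)) *
          ((min 1 (L * hh 1 ε j) - hh 1 ε (k + 1)) * Real.exp (-(A * (min 1 (L * hh 1 ε j) - hh 1 ε (k + 1))))) := by
  obtain ⟨c, hc, j0, hmain⟩ := main_lim hθ hθπ p hp ε h0 h2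
  obtain ⟨M, hM, hW⟩ := wBound hθ hθπ p hp
  have hβ : 0 < θ / Real.pi := div_pos hθ Real.pi_pos
  set β := θ / Real.pi with hβdef
  have hh1 : ∀ k : ℕ, 1 ≤ k → hh 1 ε k = Real.exp (-(ε * Real.log k)) := by
    intro k hk
    unfold hh
    rw [Nat.cast_one, div_one, max_eq_right (Real.log_nonneg (by exact_mod_cast hk))]
  set L := max 1 (max (Real.exp (ε * Real.log j0)) (Real.exp A * Real.exp A * M / c)) with hL
  have hL1 : 1 ≤ L := le_max_left _ _
  have hL2 : Real.exp (ε * Real.log j0) ≤ L := (le_max_left _ _).trans (le_max_right _ _)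
  have hL3 : Real.exp A * Real.exp A * M / c ≤ L := (le_max_right _ _).trans (le_max_right _ _)
  refine ⟨L, hL1, fun j hj => ?_⟩
  have hjpos : (0:ℝ) < j := by exact_mod_cast hj
  have hHpos := hh_pos 1 ε j
  have hs : Summable (fun k : ℕ => kap θ (p j - p (k + 1)) *
          ((min 1 (L * hh 1 ε j) - hh 1 ε (k + 1)) * Real.exp (-(A * (min 1 (L * hh 1 ε j) - hh 1 ε (k + 1)))))) := by
    refine (hW j hj (fun k => (min 1 (L * hh 1 ε j) - hh 1 ε k) * Real.exp (-(A * (min 1 (L * hh 1 ε j) - hh 1 ε k)))) (Real.exp A) (Real.exp_pos A).le ?_).1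
    intro k hk
    refine (dexp_abs A _ hA.le ?_).trans (le_mul_of_one_le_right (Real.exp_pos A).le (rho_ge_one hβ.le _))
    have a2 := hh_pos 1 ε k
    have a4 := hh_le_one 1 h0.le k
    have a5 : min 1 (L * hh 1 ε j) ≤ 1 := min_le_left _ _
    have a6 : 0 < min 1 (L * hh 1 ε j) := lt_min one_pos (by positivity)
    rw [abs_le]
    constructor <;> linarith
  refine ⟨hs, ?_⟩
  rcases le_or_gt 1 (L * hh 1 ε j) with hcase | hcase
  · rw [min_eq_left hcase]
    apply tsum_nonneg
    intro k
    have := hh_le_one 1 h0.le (k + 1)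
    exact mul_nonneg (kap_pos hθ hθπ _).le (mul_nonneg (by linarith) (Real.exp_pos _).le)
  have hj0 : j0 ≤ j := by
    by_contra! hlt
    have hlog : Real.log j ≤ Real.log j0 := Real.log_le_log hjpos (by exact_mod_cast hlt.le)
    have : 1 ≤ Real.exp (ε * Real.log j0) * hh 1 ε j := by
      rw [hh1 j hj, ← Real.exp_add]
      apply Real.one_le_exp; nlinarith
    have := mul_le_mul_of_nonneg_right hL2 hHpos.le
    linarith
  rw [min_eq_right hcase.le] at hs ⊢
  have hs1 := hW j hj (fun k => Real.exp (-(ε * Real.log ((k:ℝ) / j)))) 2 (by norm_num) (fun k hk => by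
    have a1 := abs_le.1 (one_sub_exp_le' β ε (Real.log ((k:ℝ) / j)) hβ.le h0.le h2.le)
    have a2 := rho_ge_one hβ.le (Real.log ((k:ℝ) / j))
    rw [Real.abs_exp]; linarith)
  have hs1' := hW j hj (fun k => Real.exp (-(ε * Real.log ((k:ℝ) / j)))) 1 (by norm_num) (fun k hk => by
    rw [Real.abs_exp, one_mul]
    unfold rho
    have e1 : 1 ≤ Real.exp (β / 2 * |Real.log ((k:ℝ) / j)|) := Real.one_le_exp (by positivity)
    have e2 : Real.exp (-(ε * Real.log ((k:ℝ) / j))) ≤ max 1 (Real.exp (-2 * Real.log ((k:ℝ) / j))) := by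
      rcases le_total 0 (Real.log ((k:ℝ) / j)) with h | h
      · exact (Real.exp_le_one_iff.2 (by nlinarith)).trans (le_max_left _ _)
      · exact (Real.exp_le_exp.2 (by nlinarith)).trans (le_max_right _ _)
    have e3 : 0 < Real.exp (-(ε * Real.log ((k:ℝ) / j))) := Real.exp_pos _
    nlinarith)
  have hs3 := hW j hj (fun _ => 1) 1 zero_le_one (fun k hk => by
      rw [abs_one, one_mul]; exact rho_ge_one hβ.le _)
  set S1 := ∑' k : ℕ, kap θ (p j - p (k + 1)) * Real.exp (-(ε * Real.log (((k + 1 : ℕ):ℝ) / j))) with hS1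
  set S0 := ∑' k : ℕ, kap θ (p j - p (k + 1)) * 1 with hS0
  have hterm : ∀ k : ℕ, hh 1 ε j * (Real.exp (-A) * L * (kap θ (p j - p (k + 1)) * 1) -
       Real.exp A * (kap θ (p j - p (k + 1)) * Real.exp (-(ε * Real.log (((k + 1 : ℕ):ℝ) / j))))) ≤
       kap θ (p j - p (k + 1)) *
          ((L * hh 1 ε j - hh 1 ε (k + 1)) * Real.exp (-(A * (L * hh 1 ε j - hh 1 ε (k + 1))))) := by
    intro k
    have hkpos : (0:ℝ) < ((k + 1 : ℕ):ℝ) := by positivity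
    have e : hh 1 ε (k + 1) = hh 1 ε j * Real.exp (-(ε * Real.log (((k + 1 : ℕ):ℝ) / j))) := by
      rw [hh1 _ (by omega), hh1 j hj, ← Real.exp_add, Real.log_div hkpos.ne' hjpos.ne']
      congr 1; ring
    have a2 := hh_pos 1 ε (k + 1)
    have a4 := hh_le_one 1 h0.le (k + 1)
    set K := hh 1 ε (k + 1) with hK
    set H := L * hh 1 ε j with hH
    have hHp : 0 < H := by positivity
    have hEA : Real.exp (-A) ≤ Real.exp A := Real.exp_le_exp.2 (by linarith)
    have key : Real.exp (-A) * H - Real.exp A * K ≤ (H - K) * Real.exp (-(A * (H - K))) := by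
      rcases le_total K H with h | h
      · have h5 : Real.exp (-A) ≤ Real.exp (-(A * (H - K))) := Real.exp_le_exp.2 (by nlinarith)
        have := mul_le_mul_of_nonneg_left h5 (show 0 ≤ H - K by linarith)
        nlinarith
      · have h5 : Real.exp (-(A * (H - K))) ≤ Real.exp A := Real.exp_le_exp.2 (by nlinarith)
        have := mul_le_mul_of_nonneg_left h5 (show 0 ≤ K - H by linarith)
        nlinarith
    have := mul_le_mul_of_nonneg_left key (kap_pos hθ hθπ (p j - p (k + 1))).le
    refine le_trans (le_of_eq ?_) this
    rw [e, hH]; ring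
  have hle := hasSum_le hterm (((hs3.1.hasSum.mul_left (Real.exp (-A) * L)).sub (hs1.1.hasSum.mul_left (Real.exp A))).mul_left (hh 1 ε j)) hs.hasSum
  refine le_trans (mul_nonneg hHpos.le ?_) hle
  have hm := hmain j hj0 hj
  have hS0c : c * j ≤ S0 := by
    refine hm.trans ?_
    have : ∑' k : ℕ, kap θ (p j - p (k + 1)) * (1 - Real.exp (-(ε * Real.log (((k + 1 : ℕ):ℝ) / j)))) = S0 - S1 := by
      rw [hS0, hS1, ← hs3.1.tsum_sub hs1.1]
      congr 1; funext k; ring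
    rw [this]
    have : 0 ≤ S1 := tsum_nonneg fun k => mul_nonneg (kap_pos hθ hθπ _).le (Real.exp_pos _).le
    linarith
  have hS1c : S1 ≤ M * j := by
    have := (abs_le.1 hs1'.2).2
    linarith
  rw [div_le_iff₀ hc] at hL3
  have hEE : Real.exp (-A) * Real.exp A = 1 := by rw [← Real.exp_add]; simp
  have hEp := Real.exp_pos A
  have hEn := Real.exp_pos (-A)
  have b1 : Real.exp A * M ≤ Real.exp (-A) * L * c := by
    have := mul_le_mul_of_nonneg_left hL3 hEn.le
    have e : Real.exp (-A) * (Real.exp A * Real.exp A * M) = Real.exp A * M := by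
      rw [mul_assoc, ← mul_assoc (Real.exp (-A)), hEE, one_mul]
    linarith
  have b2 := mul_le_mul_of_nonneg_left hS1c hEp.le
  have b3 := mul_le_mul_of_nonneg_left hS0c (show 0 ≤ Real.exp (-A) * L by positivity)
  have b4 := mul_le_mul_of_nonneg_right b1 hjpos.le
  have : Real.exp A * S1 ≤ Real.exp (-A) * L * S0 := by linarith
  exact sub_nonneg.2 this

lemma stepT {θ B : ℝ} (hθ : 0 < θ) (hθπ : θ < Real.pi)
    (hB : 0 < B) (hlip : ∀ u x, kap θ (u + x) ≤ Real.exp (B * |x|) * kap θ u)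
    (p x y : ℕ → ℝ) (s h b : ℕ → ℝ)
    (hp : Tendsto (fun k : ℕ => p k - (1 + θ / Real.pi) * Real.log k) atTop (𝓝 0))
    (hP : ∀ j, 1 ≤ j → HasSum (fun k : ℕ => gg θ (p j - p (k + 1))) (s j))
    (hY : ∀ j, 1 ≤ j → HasSum (fun k : ℕ => gg θ (y j - x (k + 1))) (s j))
    (T T0 : ℝ) (hT : 0 < T) (hT0 : T ≤ T0)
    (hx : ∀ k, 1 ≤ k → |x k - p k| ≤ T * h k)
    (hd : ∀ j k, 1 ≤ j → 1 ≤ k → |b j - h k| ≤ 1)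
    (hc : ∀ j, 1 ≤ j →
        Summable (fun k : ℕ => kap θ (p j - p (k + 1)) *
          ((b j - h (k + 1)) * Real.exp (-(B * T0 * (b j - h (k + 1)))))) ∧
        0 ≤ ∑' k : ℕ, kap θ (p j - p (k + 1)) *
          ((b j - h (k + 1)) * Real.exp (-(B * T0 * (b j - h (k + 1)))))) :
    ∀ j, 1 ≤ j → |y j - p j| ≤ T * b j := by
  intro j hj
  obtain ⟨M, hM, hW⟩ := wBound hθ hθπ p hp
  have hβ : 0 < θ / Real.pi := div_pos hθ Real.pi_pos
  have hs : Summable (fun k : ℕ => kap θ (p j - p (k + 1)) *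
          ((b j - h (k + 1)) * Real.exp (-(B * T * (b j - h (k + 1)))))) := by
    refine (hW j hj (fun k => (b j - h k) * Real.exp (-(B * T * (b j - h k)))) (Real.exp (B * T)) (Real.exp_pos _).le ?_).1
    intro k hk
    exact (dexp_abs (B * T) _ (by positivity) (hd j k hj hk)).trans
      (le_mul_of_one_le_right (Real.exp_pos _).le (rho_ge_one hβ.le _))
  have hnn : 0 ≤ ∑' k : ℕ, kap θ (p j - p (k + 1)) *
          ((b j - h (k + 1)) * Real.exp (-(B * T * (b j - h (k + 1))))) := by
    refine (hc j hj).2.trans (hasSum_le (fun k => ?_) (hc j hj).1.hasSum hs.hasSum)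
    apply mul_le_mul_of_nonneg_left _ (kap_pos hθ hθπ _).le
    set d := b j - h (k + 1)
    have hBT : B * T ≤ B * T0 := mul_le_mul_of_nonneg_left hT0 hB.le
    rcases le_total 0 d with h | h
    · apply mul_le_mul_of_nonneg_left _ h
      apply Real.exp_le_exp.2
      nlinarith
    · apply mul_le_mul_of_nonpos_left _ h
      apply Real.exp_le_exp.2
      nlinarith
  have e : ∀ k : ℕ, kap θ (p j - p (k + 1)) * ((T * b j - T * h (k + 1)) * Real.exp (-(B * (T * b j - T * h (k + 1)))))
     = T * (kap θ (p j - p (k + 1)) *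
          ((b j - h (k + 1)) * Real.exp (-(B * T * (b j - h (k + 1)))))) := by
    intro k
    have : B * (T * b j - T * h (k + 1)) = B * T * (b j - h (k + 1)) := by ring
    rw [this]; ring
  refine step hθ hθπ hB hlip (fun k => p (k + 1)) (fun k => x (k + 1)) (fun k => T * h (k + 1)) (p j) (y j) (T * b j) (s j)
    (hP j hj) (hY j hj) (fun k => hx _ (by omega)) ?_ ?_
  · simp only [e]; exact hs.mul_left T
  · simp only [e]; rw [tsum_mul_left]; exact mul_nonneg hT.le hnn

lemma fit (δ : ℕ → ℝ) (D M ε ε' : ℝ) (j0 : ℕ) (hD : 0 < D) (hε' : 0 < ε') (hεε : ε' ≤ ε)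
    (h1 : ∀ k, 1 ≤ k → |δ k| ≤ D) (h2 : ∀ k, 1 ≤ k → |δ k| ≤ M * hh 1 ε k) (hM : 0 < M) :
    ∃ N : ℕ, j0 ≤ N ∧ 1 ≤ N ∧ ∀ k, 1 ≤ k → |δ k| ≤ D * hh N ε' k := by
  obtain ⟨N0, hN0⟩ := exists_nat_ge (Real.exp (Real.log (M / D) / ε'))
  refine ⟨N0 + j0 + 1, by omega, by omega, fun k hk => ?_⟩
  set N := N0 + j0 + 1 with hN
  have hNpos : (0:ℝ) < N := by exact_mod_cast (show 0 < N by omega)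
  have hkpos : (0:ℝ) < k := by exact_mod_cast hk
  have hlogN : Real.log (M / D) / ε' ≤ Real.log N := by
    rw [Real.le_log_iff_exp_le hNpos]
    refine hN0.trans ?_
    exact_mod_cast (show N0 ≤ N by omega)
  rcases le_or_gt k N with hkN | hkN
  · have : hh N ε' k = 1 := by
      unfold hh
      rw [max_eq_left, mul_zero, neg_zero, Real.exp_zero]
      apply Real.log_nonpos (by positivity)
      rw [div_le_one hNpos]; exact_mod_cast hkN
    rw [this, mul_one]; exact h1 k hk
  · refine (h2 k hk).trans ?_
    have hlk : 0 ≤ Real.log k := Real.log_nonneg (by exact_mod_cast hk)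
    have e1 : hh 1 ε k = Real.exp (-(ε * Real.log k)) := by
      unfold hh
      rw [Nat.cast_one, div_one, max_eq_right hlk]
    have e2 : hh N ε' k = Real.exp (-(ε' * Real.log k)) * Real.exp (ε' * Real.log N) := by
      unfold hh
      rw [max_eq_right, ← Real.exp_add, Real.log_div hkpos.ne' hNpos.ne']
      · congr 1; ring
      · apply Real.log_nonneg; rw [le_div_iff₀ hNpos, one_mul]; exact_mod_cast hkN.le
    rw [e1, e2]
    have a1 : M / D ≤ Real.exp (ε' * Real.log N) := by
      rw [← Real.log_le_iff_le_exp (by positivity)]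
      rw [div_le_iff₀ hε'] at hlogN
      linarith
    rw [div_le_iff₀ hD] at a1
    have a2 : Real.exp (-(ε * Real.log k)) ≤ Real.exp (-(ε' * Real.log k)) :=
      Real.exp_le_exp.2 (by nlinarith)
    calc M * Real.exp (-(ε * Real.log k)) ≤ (Real.exp (ε' * Real.log N) * D) * Real.exp (-(ε' * Real.log k)) :=
          mul_le_mul a1 a2 (Real.exp_pos _).le (by positivity)
      _ = _ := by ring

lemma finale {θ : ℝ} (hθ : 0 < θ) (hθπ : θ < Real.pi) (p : ℕ → ℝ) (x : ℕ → ℕ → ℝ) (s : ℕ → ℝ)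
    (hp : Tendsto (fun k : ℕ => p k - (1 + θ / Real.pi) * Real.log k) atTop (𝓝 0))
    (hP : ∀ j, 1 ≤ j → HasSum (fun k : ℕ => gg θ (p j - p (k + 1))) (s j))
    (hY : ∀ n j, 1 ≤ j → HasSum (fun k : ℕ => gg θ (x (n + 1) j - x n (k + 1))) (s j))
    (ε : ℝ) (h0 : 0 < ε) (h2 : ε < 2) (M : ℝ) (hM : 0 < M)
    (hx0 : ∀ k, 1 ≤ k → |x 0 k - p k| ≤ M * hh 1 ε k) :
    ∃ C : ℝ, 0 < C ∧ ∃ lam : ℝ, 0 < lam ∧ lam < 1 ∧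
      ∀ n : ℕ, ∀ k : ℕ, 1 ≤ k → |x n k - p k| ≤ C * lam ^ n * hh 1 ε k := by
  obtain ⟨B, hB, hlip⟩ := kap_lip hθ hθπ
  obtain ⟨κ, hκ, j0, hcore⟩ := core hθ hθπ p hp ε h0 h2
  -- contraction
  have contr : ∀ (T ε' : ℝ) (N n0 : ℕ), 0 < T → 0 < ε' → ε' ≤ ε → B * T * ε' ≤ κ → j0 ≤ N → 1 ≤ N →
      (∀ k, 1 ≤ k → |x n0 k - p k| ≤ T * hh N ε' k) →
      ∃ lam, 0 < lam ∧ lam < 1 ∧ ∀ n k, 1 ≤ k → |x (n0 + n) k - p k| ≤ T * lam ^ n * hh N ε' k := by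
    intro T ε' N n0 hT hε' hεε hBT hN hN1 hx
    obtain ⟨lam, hl0, hl1, hl⟩ := hcore ε' (B * T) hε' hεε (by positivity) hBT N hN hN1
    refine ⟨lam, hl0, hl1, fun n => ?_⟩
    induction n with
    | zero => simpa using hx
    | succ n ih =>
      have := stepT hθ hθπ hB hlip p (x (n0 + n)) (x (n0 + n + 1)) s (hh N ε') (fun j => lam * hh N ε' j)
        hp hP (hY (n0 + n)) (T * lam ^ n) T (by positivity)
        (mul_le_of_le_one_right hT.le (pow_le_one₀ hl0.le hl1.le)) ih ?_ hl
      · intro k hk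
        have h3 := this k hk
        rw [← add_assoc, pow_succ]
        linarith
      · intro j k _ _
        have a1 := hh_pos N ε' j
        have a2 := hh_pos N ε' k
        have a3 := hh_le_one N hε'.le j
        have a4 := hh_le_one N hε'.le k
        rw [abs_le]
        constructor <;> nlinarith
  -- qualitative bounds
  have qual : ∀ n, ∃ T, 0 < T ∧ ∀ k, 1 ≤ k → |x n k - p k| ≤ T * hh 1 ε k := by
    intro n
    induction n with
    | zero => exact ⟨M, hM, hx0⟩
    | succ n ih =>
      obtain ⟨T, hT, ih⟩ := ih
      obtain ⟨L, hL1, hL⟩ := oneStep hθ hθπ p hp ε (B * T) h0 h2 (by positivity)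
      have := stepT hθ hθπ hB hlip p (x n) (x (n + 1)) s (hh 1 ε) (fun j => min 1 (L * hh 1 ε j))
        hp hP (hY n) T T hT le_rfl ih ?_ hL
      · refine ⟨T * L, by positivity, fun k hk => (this k hk).trans ?_⟩
        rw [mul_assoc]
        exact mul_le_mul_of_nonneg_left (min_le_right _ _) hT.le
      · intro j k _ _
        have a1 := hh_pos 1 ε j
        have a2 := hh_pos 1 ε k
        have a4 := hh_le_one 1 h0.le k
        have a5 : min 1 (L * hh 1 ε j) ≤ 1 := min_le_left _ _
        have a6 : 0 < min 1 (L * hh 1 ε j) := lt_min one_pos (by positivity)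
        rw [abs_le]
        constructor <;> linarith
  choose T hT hTb using qual
  -- stage one
  have hsup0 : ∀ k, 1 ≤ k → |x 0 k - p k| ≤ M := fun k hk =>
    (hx0 k hk).trans (mul_le_of_le_one_right hM.le (hh_le_one 1 h0.le k))
  set ε1 := min ε (κ / (B * M)) with hε1
  have hepos : 0 < ε1 := lt_min h0 (by positivity)
  obtain ⟨N1, hN1, hN1', hfit1⟩ := fit (fun k => x 0 k - p k) M M ε ε1 j0 hM hepos (min_le_left _ _) hsup0 hx0 hM
  obtain ⟨l1, hl10, hl11, hst1⟩ := contr M ε1 N1 0 hM hepos (min_le_left _ _) (by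
    have := min_le_right ε (κ / (B * M))
    rw [← hε1, le_div_iff₀ (by positivity)] at this
    linarith) hN1 hN1' hfit1
  set t0 := κ / (B * ε) with ht0
  have ht0pos : 0 < t0 := by positivity
  obtain ⟨n0, hn0⟩ := exists_pow_lt_of_lt_one (show 0 < t0 / M by positivity) hl11
  rw [lt_div_iff₀ hM] at hn0
  have hsup : ∀ k, 1 ≤ k → |x n0 k - p k| ≤ t0 := by
    intro k hk
    have := hst1 n0 k hk
    rw [zero_add] at this
    refine this.trans ((mul_le_of_le_one_right (by positivity) (hh_le_one N1 hepos.le k)).trans ?_)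
    linarith
  obtain ⟨N2, hN2, hN2', hfit2⟩ := fit (fun k => x n0 k - p k) t0 (T n0) ε ε j0 ht0pos h0 le_rfl hsup (hTb n0) (hT n0)
  obtain ⟨lam, hlam0, hlam1, hst2⟩ := contr t0 ε N2 n0 ht0pos h0 le_rfl (by
    rw [ht0]; apply le_of_eq; field_simp) hN2 hN2' hfit2
  have hN2pos : (0:ℝ) < N2 := by exact_mod_cast hN2'
  have hhN : ∀ k : ℕ, 1 ≤ k → hh N2 ε k ≤ Real.exp (ε * Real.log N2) * hh 1 ε k := by
    intro k hk
    have hkpos : (0:ℝ) < k := by exact_mod_cast hk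
    have hlk : 0 ≤ Real.log k := Real.log_nonneg (by exact_mod_cast hk)
    unfold hh
    rw [Nat.cast_one, div_one, max_eq_right hlk, ← Real.exp_add]
    apply Real.exp_le_exp.2
    have h3 := le_max_right 0 (Real.log ((k:ℝ) / N2))
    rw [Real.log_div hkpos.ne' hN2pos.ne'] at h3 ⊢
    nlinarith
  set R := t0 * Real.exp (ε * Real.log N2) + ∑ i ∈ Finset.range n0, T i with hR
  have hsumnn : 0 ≤ ∑ i ∈ Finset.range n0, T i := Finset.sum_nonneg fun i _ => (hT i).le
  have hRpos : 0 < R := by positivity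
  refine ⟨R / lam ^ n0, by positivity, lam, hlam0, hlam1, fun n k hk => ?_⟩
  have hhp := hh_pos 1 ε k
  rcases lt_or_ge n n0 with hn | hn
  · refine (hTb n k hk).trans (mul_le_mul_of_nonneg_right ?_ hhp.le)
    have b1 : T n ≤ R := by
      have := Finset.single_le_sum (fun i _ => (hT i).le) (Finset.mem_range.2 hn)
      have h4 : 0 < t0 * Real.exp (ε * Real.log N2) := by positivity
      linarith
    have b2 : lam ^ n0 ≤ lam ^ n := pow_le_pow_of_le_one hlam0.le hlam1.le hn.le
    rw [div_mul_eq_mul_div, le_div_iff₀ (by positivity)]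
    exact mul_le_mul b1 b2 (by positivity) hRpos.le
  · obtain ⟨m, rfl⟩ := Nat.exists_eq_add_of_le hn
    refine (hst2 m k hk).trans ?_
    have e : R / lam ^ n0 * lam ^ (n0 + m) = R * lam ^ m := by
      rw [pow_add]; field_simp
    rw [e]
    have b3 := mul_le_mul_of_nonneg_left (hhN k hk) (show 0 ≤ t0 * lam ^ m by positivity)
    have b4 : t0 * Real.exp (ε * Real.log N2) ≤ R := by linarith
    have b5 := mul_le_mul_of_nonneg_right b4 (show 0 ≤ lam ^ m * hh 1 ε k by positivity)
    linarith

theorem stmt_4 (θ : ℝ) (hθ : 0 < θ) (hθπ : θ < Real.pi)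
    (Q : ℕ → ℝ) (hQpos : ∀ k, 1 ≤ k → 0 < Q k)
    (hQ : (fun k : ℕ => Q k - (k : ℝ)) =O[atTop] fun _ : ℕ => (1 : ℝ))
    (hQ' : ∀ k : ℕ, 1 ≤ k → ((k : ℝ) - 1 / 2) * θ / Real.pi < Q k)
    (P : ℕ → ℝ) (hPpos : ∀ k, 1 ≤ k → 0 < P k)
    (hfix : ∀ j, 1 ≤ j → phi θ P P j = ENNReal.ofReal (Q j))
    (hPasymp : (fun k : ℕ => Real.log (P k) - (1 + θ / Real.pi) * Real.log k)
      =o[atTop] fun _ : ℕ => (1 : ℝ))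
    (ε : ℝ) (hε0 : 0 < ε) (hε2 : ε < 2)
    (X : ℕ → ℕ → ℝ) (hXpos : ∀ n, ∀ k, 1 ≤ k → 0 < X n k)
    (hX0 : (fun k : ℕ => Real.log (X 0 k) - Real.log (P k)) =O[atTop]
      fun k : ℕ => (k : ℝ) ^ (-ε))
    (hiter : ∀ n : ℕ, ∀ j, 1 ≤ j → phi θ (X n) (X (n + 1)) j = ENNReal.ofReal (Q j)) :
    ∃ C : ℝ, 0 < C ∧ ∃ lam : ℝ, 0 < lam ∧ lam < 1 ∧
      ∀ n : ℕ, ∀ k : ℕ, 1 ≤ k →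
        (k : ℝ) ^ ε * |Real.log (X n k) - Real.log (P k)| ≤ C * lam ^ n := by
  have hp : Tendsto (fun k : ℕ => Real.log (P k) - (1 + θ / Real.pi) * Real.log k) atTop (𝓝 0) :=
    (isLittleO_one_iff ℝ).1 hPasymp
  have hhk : ∀ k : ℕ, 1 ≤ k → hh 1 ε k = (k:ℝ) ^ (-ε) := by
    intro k hk
    have hkpos : (0:ℝ) < k := by exact_mod_cast hk
    unfold hh
    rw [Nat.cast_one, div_one, max_eq_right (Real.log_nonneg (by exact_mod_cast hk)), Real.rpow_def_of_pos hkpos]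
    congr 1; ring
  obtain ⟨c, hc, hbd⟩ := hX0.exists_pos
  rw [IsBigOWith, eventually_atTop] at hbd
  obtain ⟨K, hK⟩ := hbd
  set δ : ℕ → ℝ := fun k => Real.log (X 0 k) - Real.log (P k) with hδ
  set M := c + ∑ i ∈ Finset.range K, |δ i| * (hh 1 ε i)⁻¹ with hM
  have hnn : ∀ i, 0 ≤ |δ i| * (hh 1 ε i)⁻¹ := fun i => mul_nonneg (abs_nonneg _) (inv_nonneg.2 (hh_pos 1 ε i).le)
  have hsn : 0 ≤ ∑ i ∈ Finset.range K, |δ i| * (hh 1 ε i)⁻¹ := Finset.sum_nonneg fun i _ => hnn i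
  have hMpos : 0 < M := by linarith
  have hx0 : ∀ k, 1 ≤ k → |δ k| ≤ M * hh 1 ε k := by
    intro k hk
    have hhp := hh_pos 1 ε k
    rcases lt_or_ge k K with h | h
    · have h1 := Finset.single_le_sum (fun i _ => hnn i) (Finset.mem_range.2 h)
      have h3 : |δ k| * (hh 1 ε k)⁻¹ ≤ M := by linarith
      rwa [← div_eq_mul_inv, div_le_iff₀ hhp] at h3
    · have h1 := hK k h
      rw [Real.norm_eq_abs, Real.norm_eq_abs, ← hhk k hk, abs_of_pos hhp] at h1
      refine h1.trans (mul_le_mul_of_nonneg_right (by linarith) hhp.le)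
  obtain ⟨C, hC, lam, h0, h1, h⟩ := finale hθ hθπ (fun k => Real.log (P k)) (fun n k => Real.log (X n k))
    (fun j => Real.pi * Q j) hp
    (fun j hj => phi_hasSum hθ hθπ P P (Q j) (hQpos j hj) j hPpos (hPpos j hj) (hfix j hj))
    (fun n j hj => phi_hasSum hθ hθπ (X n) (X (n + 1)) (Q j) (hQpos j hj) j (hXpos n) (hXpos (n + 1) j hj) (hiter n j hj))
    ε hε0 hε2 M hMpos hx0
  refine ⟨C, hC, lam, h0, h1, fun n k hk => ?_⟩
  have hkpos : (0:ℝ) < k := by exact_mod_cast hk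
  have h3 := mul_le_mul_of_nonneg_left (h n k hk) (Real.rpow_nonneg hkpos.le ε)
  refine h3.trans (le_of_eq ?_)
  rw [hhk k hk, Real.rpow_neg hkpos.le]
  have := (Real.rpow_pos_of_pos hkpos ε).ne'
  field_simp
end

section
/- Suppose X, X', Y, Y' are sequences of positive reals with φ_j(X,Y) = Q_j = φ_j(X',Y') < ∞ for all j ≥ 1. If ln X'_k − ln X_k → 0 as k → ∞ and X' ≠ X, then sup_{j≥1} |ln Y'_j − ln Y_j| < sup_{k≥1} |ln X'_k − ln X_k|. -/
open Filter Asymptotics MeasureTheory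
open scoped ENNReal Topology

/-- `GG θ t = arg (1 + e^{t + iθ})`. -/
noncomputable def GG (θ t : ℝ) : ℝ :=
  (Complex.log (1 + (Real.exp t : ℂ) * Complex.exp (θ * Complex.I))).im

noncomputable def PP (θ t : ℝ) : ℝ :=
  Real.sin θ / (Real.exp t + Real.exp (-t) + 2 * Real.cos θ)

theorem Theta_eq_GG (θ A B : ℝ) (hA : 0 < A) (hB : 0 < B) :
    Theta θ A B = GG θ (Real.log B - Real.log A) := by
  unfold Theta GG
  rw [Complex.log_im, Real.exp_sub, Real.exp_log hA, Real.exp_log hB]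
  rw [← Complex.arg_real_mul (1 + ((B / A : ℝ) : ℂ) * Complex.exp (θ * Complex.I)) hA]
  congr 1
  have : (A : ℂ) ≠ 0 := by exact_mod_cast hA.ne'
  push_cast
  field_simp

theorem kappa_pos (θ : ℝ) (hθ : 0 < θ) (hθπ : θ < Real.pi) : 0 < 1 - |Real.cos θ| := by
  have h1 := Real.sin_pos_of_pos_of_lt_pi hθ hθπ
  have h2 := Real.sin_sq_add_cos_sq θ
  have h3 : |Real.cos θ| ^ 2 < 1 := by rw [sq_abs]; nlinarith
  nlinarith [abs_nonneg (Real.cos θ)]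

theorem two_le_S (t : ℝ) : 2 ≤ Real.exp t + Real.exp (-t) := by
  have h1 := Real.exp_pos t
  have h2 := Real.exp_pos (-t)
  have h3 : Real.exp t * Real.exp (-t) = 1 := by rw [← Real.exp_add]; simp
  nlinarith [sq_nonneg (Real.exp t - Real.exp (-t))]

theorem D_lower (θ t : ℝ) :
    (1 - |Real.cos θ|) * (Real.exp t + Real.exp (-t)) ≤
      Real.exp t + Real.exp (-t) + 2 * Real.cos θ := by
  have h1 := two_le_S t
  have h2 := neg_abs_le (Real.cos θ)
  nlinarith [abs_nonneg (Real.cos θ)]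

theorem D_upper (θ t : ℝ) :
    Real.exp t + Real.exp (-t) + 2 * Real.cos θ ≤ 2 * (Real.exp t + Real.exp (-t)) := by
  have h1 := two_le_S t
  have h2 := Real.cos_le_one θ
  linarith

theorem D_pos (θ : ℝ) (hθ : 0 < θ) (hθπ : θ < Real.pi) (t : ℝ) :
    0 < Real.exp t + Real.exp (-t) + 2 * Real.cos θ :=
  lt_of_lt_of_le (mul_pos (kappa_pos θ hθ hθπ) (by positivity)) (D_lower θ t)

theorem PP_pos (θ : ℝ) (hθ : 0 < θ) (hθπ : θ < Real.pi) (t : ℝ) : 0 < PP θ t :=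
  div_pos (Real.sin_pos_of_pos_of_lt_pi hθ hθπ) (D_pos θ hθ hθπ t)

theorem PP_compare (θ : ℝ) (hθ : 0 < θ) (hθπ : θ < Real.pi) (R u v : ℝ) (h : |u - v| ≤ R) :
    PP θ u ≤ (2 / (1 - |Real.cos θ|) * Real.exp R) * PP θ v := by
  have hk := kappa_pos θ hθ hθπ
  have hs := Real.sin_pos_of_pos_of_lt_pi hθ hθπ
  obtain ⟨h1, h2⟩ := abs_le.1 h
  have hS : Real.exp v + Real.exp (-v) ≤ Real.exp R * (Real.exp u + Real.exp (-u)) := by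
    rw [mul_add, ← Real.exp_add, ← Real.exp_add]
    exact add_le_add (Real.exp_le_exp.2 (by linarith)) (Real.exp_le_exp.2 (by linarith))
  have hDu := D_lower θ u
  have hDv := D_upper θ v
  have pu := D_pos θ hθ hθπ u
  have pv := D_pos θ hθ hθπ v
  unfold PP
  rw [div_mul_eq_mul_div, div_mul_div_comm, div_le_div_iff₀ pu (mul_pos hk pv)]
  have e := Real.exp_pos R
  have : (1 - |Real.cos θ|) * (Real.exp v + Real.exp (-v) + 2 * Real.cos θ) ≤
      2 * Real.exp R * (Real.exp u + Real.exp (-u) + 2 * Real.cos θ) := by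
    calc _ ≤ (1 - |Real.cos θ|) * (2 * (Real.exp R * (Real.exp u + Real.exp (-u)))) := by
            apply mul_le_mul_of_nonneg_left _ hk.le; linarith
      _ = 2 * Real.exp R * ((1 - |Real.cos θ|) * (Real.exp u + Real.exp (-u))) := by ring
      _ ≤ _ := by gcongr
  nlinarith

theorem GG_deriv (θ : ℝ) (hθ : 0 < θ) (hθπ : θ < Real.pi) (t : ℝ) :
    HasDerivAt (GG θ) (PP θ t) t := by
  have hs := Real.sin_pos_of_pos_of_lt_pi hθ hθπ
  have him : 0 < (1 + (Real.exp t : ℂ) * Complex.exp (θ * Complex.I)).im := by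
    rw [Complex.add_im, Complex.im_ofReal_mul,
      Complex.exp_ofReal_mul_I_im]
    simp only [Complex.one_im, zero_add]
    exact mul_pos (Real.exp_pos t) hs
  have h1 : HasDerivAt (fun t : ℝ => 1 + (Real.exp t : ℂ) * Complex.exp (θ * Complex.I))
      ((Real.exp t : ℂ) * Complex.exp (θ * Complex.I)) t :=
    ((Real.hasDerivAt_exp t).ofReal_comp.mul_const _).const_add 1
  have h2 := h1.clog_real (Complex.mem_slitPlane_iff.2 (Or.inr him.ne'))
  have h3 := Complex.imCLM.hasFDerivAt.comp_hasDerivAt t h2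
  refine HasDerivAt.congr_deriv (f := GG θ) h3 ?_
  have hD := D_pos θ hθ hθπ t
  rw [Complex.imCLM_apply, Complex.div_im, PP, Complex.normSq_apply]
  simp only [Complex.add_im, Complex.add_re, Complex.one_im, Complex.one_re,
    Complex.im_ofReal_mul, Complex.re_ofReal_mul, Complex.exp_ofReal_mul_I_im,
    Complex.exp_ofReal_mul_I_re] at him ⊢
  have e := Real.exp_pos t
  have hD' : (1 + Real.exp t * Real.cos θ) * (1 + Real.exp t * Real.cos θ) +
      (0 + Real.exp t * Real.sin θ) * (0 + Real.exp t * Real.sin θ)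
      = Real.exp t * (Real.exp t + Real.exp (-t) + 2 * Real.cos θ) := by
    have h4 : Real.exp t * Real.exp (-t) = 1 := by rw [← Real.exp_add]; simp
    have h5 := Real.sin_sq_add_cos_sq θ
    linear_combination (Real.exp t)^2 * h5 - h4
  rw [hD', ← sub_div, div_eq_div_iff (mul_pos e hD).ne' hD.ne']
  ring

theorem GG_strictMono (θ : ℝ) (hθ : 0 < θ) (hθπ : θ < Real.pi) : StrictMono (GG θ) :=
  strictMono_of_hasDerivAt_pos (fun t => GG_deriv θ hθ hθπ t) (fun t => PP_pos θ hθ hθπ t)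

theorem GG_nonneg (θ : ℝ) (hθ : 0 < θ) (hθπ : θ < Real.pi) (t : ℝ) : 0 ≤ GG θ t := by
  have hs := Real.sin_pos_of_pos_of_lt_pi hθ hθπ
  unfold GG
  rw [Complex.log_im, Complex.arg_nonneg_iff, Complex.add_im, Complex.im_ofReal_mul,
      Complex.exp_ofReal_mul_I_im]
  simp only [Complex.one_im, zero_add]
  exact (mul_pos (Real.exp_pos t) hs).le

theorem GG_mvt (θ : ℝ) (hθ : 0 < θ) (hθπ : θ < Real.pi) (a b : ℝ) (hab : a < b) :
    ∃ c, a < c ∧ c < b ∧ GG θ b - GG θ a = (b - a) * PP θ c := by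
  obtain ⟨c, hc, h⟩ := exists_hasDerivAt_eq_slope (GG θ) (PP θ) hab
    (fun x _ => (GG_deriv θ hθ hθπ x).continuousAt.continuousWithinAt)
    (fun x _ => GG_deriv θ hθ hθπ x)
  refine ⟨c, hc.1, hc.2, ?_⟩
  rw [h, mul_div_cancel₀ _ (by linarith)]

theorem key (θ : ℝ) (hθ : 0 < θ) (hθπ : θ < Real.pi) (x x' : ℕ → ℝ) (M : ℝ) (hM : 0 < M)
    (hd : ∀ k, x' k - x k ≤ M) (hlim : Tendsto (fun k => x' k - x k) atTop (nhds 0)) :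
    ∃ s < M, ∀ y y', y + s < y' → Summable (fun k => GG θ (y - x k)) →
      Summable (fun k => GG θ (y' - x' k)) →
      ∑' k, GG θ (y - x k) < ∑' k, GG θ (y' - x' k) := by
  have hmono := GG_strictMono θ hθ hθπ
  obtain ⟨N, hN⟩ := eventually_atTop.1 (hlim.eventually (eventually_le_nhds (half_pos hM)))
  obtain ⟨R0, hR0⟩ : ∃ R0, ∀ k ∈ Finset.range N, |x k - x N| ≤ R0 := by
    refine ⟨∑ k ∈ Finset.range N, |x k - x N|, fun k hk => ?_⟩
    exact Finset.single_le_sum (f := fun k => |x k - x N|) (fun i _ => abs_nonneg _) hk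
  set C := 2 / (1 - |Real.cos θ|) * Real.exp (R0 + 2 * M) with hC
  have hCpos : 0 < C := mul_pos (div_pos two_pos (kappa_pos θ hθ hθπ)) (Real.exp_pos _)
  set δ := min (M / 4) (M / 4 / ((N + 1) * C)) with hδ
  have hden : 0 < ((N : ℝ) + 1) * C := by positivity
  have hδpos : 0 < δ := by rw [hδ]; apply lt_min <;> positivity
  have hδ1 : δ ≤ M / 4 := min_le_left _ _
  have hδ2 : δ * ((N + 1) * C) ≤ M / 4 := (le_div_iff₀ hden).1 (min_le_right _ _)
  refine ⟨M - δ, by linarith, fun y y' hyy hs hs' => ?_⟩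
  have hsb : Summable (fun k => GG θ (y + (M - δ) - x' k)) :=
    Summable.of_nonneg_of_le (fun k => GG_nonneg θ hθ hθπ _)
      (fun k => hmono.monotone (by linarith)) hs'
  have hlt : ∑' k, GG θ (y + (M - δ) - x' k) < ∑' k, GG θ (y' - x' k) :=
    Summable.tsum_lt_tsum (i := 0) (fun k => hmono.monotone (by linarith))
      (hmono (by linarith)) hsb hs'
  refine lt_of_le_of_lt ?_ hlt
  rw [← sub_nonneg, ← hsb.tsum_sub hs]
  have hbig : ∀ k, N ≤ k →
      GG θ (y + M / 4 - x k) - GG θ (y - x k) ≤ GG θ (y + (M - δ) - x' k) - GG θ (y - x k) := by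
    intro k hk
    have := hN k hk
    have := hmono.monotone (show y + M / 4 - x k ≤ y + (M - δ) - x' k by linarith)
    linarith
  have hpart : 0 ≤ ∑ k ∈ Finset.range (N + 1), (GG θ (y + (M - δ) - x' k) - GG θ (y - x k)) := by
    rw [Finset.sum_range_succ]
    obtain ⟨η, h1, h2, h3⟩ := GG_mvt θ hθ hθπ (y - x N) (y + M / 4 - x N) (by linarith)
    have hη := PP_pos θ hθ hθπ η
    have hsmall : ∀ k ∈ Finset.range N,
        -(δ * (C * PP θ η)) ≤ GG θ (y + (M - δ) - x' k) - GG θ (y - x k) := by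
      intro k hk
      obtain ⟨ξ, g1, g2, g3⟩ := GG_mvt θ hθ hθπ (y - δ - x k) (y - x k) (by linarith)
      have g4 := hmono.monotone (show y - δ - x k ≤ y + (M - δ) - x' k by linarith [hd k])
      obtain ⟨r1, r2⟩ := abs_le.1 (hR0 k hk)
      have g5 := PP_compare θ hθ hθπ (R0 + 2 * M) ξ η (abs_le.2 ⟨by linarith, by linarith⟩)
      have g6 := mul_le_mul_of_nonneg_left g5 hδpos.le
      have g7 : (y - x k) - (y - δ - x k) = δ := by ring
      rw [g7] at g3
      linarith
    have h4 := Finset.sum_le_sum hsmall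
    rw [Finset.sum_const, Finset.card_range, nsmul_eq_mul] at h4
    have h5 := hbig N le_rfl
    have h6 : y + M / 4 - x N - (y - x N) = M / 4 := by ring
    rw [h6] at h3
    have h7 := mul_le_mul_of_nonneg_right hδ2 hη.le
    have h8 : 0 < δ * (C * PP θ η) := by positivity
    nlinarith
  refine hpart.trans ((hsb.sub hs).sum_le_tsum _ fun k hk => ?_)
  have hk' : N ≤ k := by simp at hk; omega
  have := hbig k hk'
  have := hmono.monotone (show y - x k ≤ y + M / 4 - x k by linarith)
  linarith

theorem phi_conv (θ : ℝ) (hθ : 0 < θ) (hθπ : θ < Real.pi) (X Y : ℕ → ℝ) (j : ℕ) (q : ℝ)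
    (hq : 0 < q) (hX : ∀ k, 1 ≤ k → 0 < X k) (hY : 0 < Y j)
    (h : phi θ X Y j = ENNReal.ofReal q) :
    HasSum (fun k => GG θ (Real.log (Y j) - Real.log (X (k + 1)))) (Real.pi * q) := by
  unfold phi at h
  have hpi := Real.pi_pos
  simp_rw [fun k : ℕ => Theta_eq_GG θ (X (k + 1)) (Y j) (hX _ (by omega)) hY] at h
  have hne : ENNReal.ofReal (1 / Real.pi) ≠ 0 := by
    rw [Ne, ENNReal.ofReal_eq_zero, not_le]; positivity
  have h2 : ∑' k : ℕ, ENNReal.ofReal (GG θ (Real.log (Y j) - Real.log (X (k + 1))))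
      = ENNReal.ofReal (Real.pi * q) := by
    rw [← ENNReal.mul_right_inj hne ENNReal.ofReal_ne_top, h, ← ENNReal.ofReal_mul (by positivity)]
    congr 1
    field_simp
  have hnn := fun k : ℕ => GG_nonneg θ hθ hθπ (Real.log (Y j) - Real.log (X (k + 1)))
  have hsum : Summable (fun k => GG θ (Real.log (Y j) - Real.log (X (k + 1)))) := by
    have := ENNReal.summable_toReal (h2.trans_ne ENNReal.ofReal_ne_top)
    simpa [ENNReal.toReal_ofReal, hnn] using this
  rw [← ENNReal.ofReal_tsum_of_nonneg hnn hsum,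
    ENNReal.ofReal_eq_ofReal_iff (tsum_nonneg hnn) (by positivity)] at h2
  exact h2 ▸ hsum.hasSum

theorem stmt_7 (θ : ℝ) (hθ : 0 < θ) (hθπ : θ < Real.pi)
    (Q : ℕ → ℝ) (hQpos : ∀ k, 1 ≤ k → 0 < Q k)
    (X X' Y Y' : ℕ → ℝ)
    (hXpos : ∀ k, 1 ≤ k → 0 < X k) (hX'pos : ∀ k, 1 ≤ k → 0 < X' k)
    (hYpos : ∀ j, 1 ≤ j → 0 < Y j) (hY'pos : ∀ j, 1 ≤ j → 0 < Y' j)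
    (hfix : ∀ j, 1 ≤ j → phi θ X Y j = ENNReal.ofReal (Q j))
    (hfix' : ∀ j, 1 ≤ j → phi θ X' Y' j = ENNReal.ofReal (Q j))
    (hlim : Tendsto (fun k : ℕ => Real.log (X' k) - Real.log (X k)) atTop (nhds 0))
    (hne : ∃ k, 1 ≤ k ∧ X' k ≠ X k) :
    ∃ s : ℝ, (∀ j, 1 ≤ j → |Real.log (Y' j) - Real.log (Y j)| ≤ s) ∧
      ∃ k, 1 ≤ k ∧ s < |Real.log (X' k) - Real.log (X k)| := by
  obtain ⟨k1, hk1, hk1ne⟩ := hne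
  set f : ℕ → ℝ := fun k => Real.log (X' (k + 1)) - Real.log (X (k + 1)) with hf
  have hflim : Tendsto f atTop (nhds 0) := hlim.comp (tendsto_add_atTop_nat 1)
  have hk1pos : 0 < |f (k1 - 1)| := by
    rw [abs_pos, hf]
    simp only [Nat.sub_add_cancel hk1]
    rw [sub_ne_zero]
    exact fun h => hk1ne (Real.log_injOn_pos (hX'pos k1 hk1) (hXpos k1 hk1) h)
  obtain ⟨k0, hk0⟩ : ∃ k0, ∀ k, |f k| ≤ |f k0| := by
    refine Continuous.exists_forall_ge' (f := fun k => |f k|) continuous_of_discreteTopology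
      (k1 - 1) ?_
    rw [cocompact_eq_cofinite, Nat.cofinite_eq_atTop]
    have := hflim.abs
    rw [abs_zero] at this
    exact this.eventually (eventually_le_nhds hk1pos)
  have hM : 0 < |f k0| := hk1pos.trans_le (hk0 _)
  obtain ⟨s1, hs1, H1⟩ := key θ hθ hθπ (fun k => Real.log (X (k + 1)))
    (fun k => Real.log (X' (k + 1))) _ hM (fun k => (le_abs_self _).trans (hk0 k)) hflim
  obtain ⟨s2, hs2, H2⟩ := key θ hθ hθπ (fun k => Real.log (X' (k + 1)))
    (fun k => Real.log (X (k + 1))) _ hM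
    (fun k => by have h1 := hk0 k; have h2 := neg_abs_le (f k); simp only [hf] at h1 h2 ⊢; linarith)
    (by simpa [hf] using hflim.neg)
  refine ⟨max s1 s2, fun j hj => ?_, k0 + 1, by omega, max_lt hs1 hs2⟩
  have A := phi_conv θ hθ hθπ X Y j (Q j) (hQpos j hj) hXpos (hYpos j hj) (hfix j hj)
  have B := phi_conv θ hθ hθπ X' Y' j (Q j) (hQpos j hj) hX'pos (hY'pos j hj) (hfix' j hj)
  rw [abs_le]
  constructor
  · by_contra! hc
    have := H2 (Real.log (Y' j)) (Real.log (Y j)) (by linarith [le_max_right s1 s2])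
      B.summable A.summable
    rw [A.tsum_eq, B.tsum_eq] at this
    exact lt_irrefl _ this
  · by_contra! hc
    have := H1 (Real.log (Y j)) (Real.log (Y' j)) (by linarith [le_max_left s1 s2])
      A.summable B.summable
    rw [A.tsum_eq, B.tsum_eq] at this
    exact lt_irrefl _ this
end

section
/- Assume Q_k = k + O(1). (i) If α > 1 and X is a sequence of positive reals with ln X_k = α·ln k + O(1), then there exists a sequence Y of positive reals with φ_j(X,Y) = Q_j for all j, and any such Y satisfies ln Y_j = α·ln j + O(1). (ii) If 0 < α ≤ 1 and X is a sequence of positive reals with ln X_k = α·ln k + O(1), then φ_j(X,Y) = ∞ for every sequence Y of positive reals and every j; in particular there is no Y with φ_j(X,Y) = Q_j for all j. -/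
open Filter Asymptotics MeasureTheory
open scoped ENNReal Topology

lemma zre (θ x y : ℝ) : ((x : ℂ) + (y : ℂ) * Complex.exp (θ * Complex.I)).re
    = x + y * Real.cos θ := by
  simp [Complex.exp_ofReal_mul_I_re]

lemma zim (θ x y : ℝ) : ((x : ℂ) + (y : ℂ) * Complex.exp (θ * Complex.I)).im
    = y * Real.sin θ := by
  simp [Complex.exp_ofReal_mul_I_im]

lemma znorm_le (θ x y : ℝ) (hx : 0 < x) (hy : 0 < y) :
    ‖(x : ℂ) + (y : ℂ) * Complex.exp (θ * Complex.I)‖ ≤ x + y := by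
  refine (norm_add_le _ _).trans ?_
  rw [norm_mul, Complex.norm_exp_ofReal_mul_I]
  simp [abs_of_pos hx, abs_of_pos hy]

lemma le_znorm (θ x y : ℝ) (hx : 0 < x) (hy : 0 < y) :
    x - y ≤ ‖(x : ℂ) + (y : ℂ) * Complex.exp (θ * Complex.I)‖ := by
  have h := Complex.re_le_norm ((x : ℂ) + (y : ℂ) * Complex.exp (θ * Complex.I))
  rw [zre] at h
  nlinarith [Real.neg_one_le_cos θ]

lemma Theta_lower (θ x y : ℝ) (hθ : 0 < θ) (hθπ : θ < Real.pi) (hx : 0 < x) (hy : 0 < y) :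
    Real.sin θ * (y / (x + y)) ≤ Theta θ x y := by
  have hs : 0 < Real.sin θ := Real.sin_pos_of_pos_of_lt_pi hθ hθπ
  have him : 0 < ((x : ℂ) + (y : ℂ) * Complex.exp (θ * Complex.I)).im := by
    rw [zim]; positivity
  have hnn : 0 ≤ Theta θ x y := Complex.arg_nonneg_iff.2 him.le
  have hz : 0 < ‖(x : ℂ) + (y : ℂ) * Complex.exp (θ * Complex.I)‖ :=
    lt_of_lt_of_le him (Complex.im_le_norm _)
  have h1 : Real.sin (Theta θ x y) ≤ Theta θ x y := Real.sin_le hnn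
  refine le_trans ?_ h1
  unfold Theta
  rw [Complex.sin_arg, zim, mul_div_assoc', mul_comm]
  exact div_le_div_of_nonneg_left (by positivity) hz (znorm_le θ x y hx hy)

lemma Theta_upper (θ x y : ℝ) (hθ : 0 < θ) (hθπ : θ < Real.pi) (hx : 0 < x) (hy : 0 < y) :
    Theta θ x y ≤ 3 * Real.pi * (y / (x + y)) := by
  have hs : 0 < Real.sin θ := Real.sin_pos_of_pos_of_lt_pi hθ hθπ
  have hpi := Real.pi_pos
  rcases lt_or_ge x (2 * y) with h | h
  · have h1 : Theta θ x y ≤ Real.pi := Complex.arg_le_pi _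
    have h2 : 1 / 3 ≤ y / (x + y) := by
      rw [div_le_div_iff₀ (by norm_num) (by positivity)]; linarith
    nlinarith
  · have him : 0 < ((x : ℂ) + (y : ℂ) * Complex.exp (θ * Complex.I)).im := by
      rw [zim]; positivity
    have hre : 0 ≤ ((x : ℂ) + (y : ℂ) * Complex.exp (θ * Complex.I)).re := by
      rw [zre]; nlinarith [Real.neg_one_le_cos θ]
    have hnn : 0 ≤ Theta θ x y := Complex.arg_nonneg_iff.2 him.le
    have hle : Theta θ x y ≤ Real.pi / 2 := Complex.arg_le_pi_div_two_iff.2 (Or.inl hre)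
    have h1 := Real.mul_le_sin hnn hle
    have hsin : Real.sin (Theta θ x y) ≤ 3 * (y / (x + y)) := by
      unfold Theta
      rw [Complex.sin_arg, zim, mul_div_assoc']
      have hxy : 0 < x - y := by linarith
      have := le_znorm θ x y hx hy
      rw [div_le_div_iff₀ (by linarith) (by positivity)]
      have e1 : y * Real.sin θ ≤ y := by nlinarith [Real.sin_le_one θ]
      calc y * Real.sin θ * (x + y) ≤ y * (x + y) := by gcongr
        _ ≤ 3 * y * (x - y) := by nlinarith
        _ ≤ _ := by gcongr
    have h2 : 2 / Real.pi * Theta θ x y ≤ 3 * (y / (x + y)) := h1.trans hsin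
    have h3 : 2 * Theta θ x y ≤ 3 * (y / (x + y)) * Real.pi := by
      rw [div_mul_eq_mul_div, div_le_iff₀ hpi] at h2; exact h2
    linarith

lemma F_lower (θ : ℝ) (hθ : 0 < θ) (hθπ : θ < Real.pi) (X : ℕ → ℝ)
    (hX : ∀ k, 1 ≤ k → 0 < X k) (y : ℝ) (hy : 0 < y) (N : ℕ)
    (hN : ∀ k, k < N → X (k + 1) ≤ y) :
    ENNReal.ofReal (N * (Real.sin θ / 2)) ≤ ∑' k : ℕ, ENNReal.ofReal (Theta θ (X (k + 1)) y) := by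
  have hs : 0 < Real.sin θ := Real.sin_pos_of_pos_of_lt_pi hθ hθπ
  refine le_trans ?_ (ENNReal.sum_le_tsum (Finset.range N))
  have : ∀ k ∈ Finset.range N, ENNReal.ofReal (Real.sin θ / 2) ≤
      ENNReal.ofReal (Theta θ (X (k + 1)) y) := by
    intro k hk
    apply ENNReal.ofReal_le_ofReal
    have hxk := hX (k + 1) (by omega)
    refine le_trans ?_ (Theta_lower θ _ y hθ hθπ hxk hy)
    have h2 : 1 / 2 ≤ y / (X (k + 1) + y) := by
      rw [div_le_div_iff₀ (by norm_num) (by positivity)]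
      linarith [hN k (Finset.mem_range.1 hk)]
    nlinarith
  refine le_trans ?_ (Finset.sum_le_sum this)
  rw [Finset.sum_const, Finset.card_range, nsmul_eq_mul, ENNReal.ofReal_mul (by positivity),
    ENNReal.ofReal_natCast]

lemma summable_h (α : ℝ) (hα : 1 < α) : Summable (fun m : ℕ => 1 / ((m : ℝ) ^ α + 1)) := by
  refine Summable.of_norm_bounded_eventually_nat (Real.summable_one_div_nat_rpow.2 hα) ?_
  filter_upwards [eventually_ge_atTop 1] with m hm
  have : (0 : ℝ) < (m : ℝ) := by exact_mod_cast hm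
  have h2 : 0 < (m : ℝ) ^ α := by positivity
  rw [Real.norm_of_nonneg (by positivity)]
  exact div_le_div_of_nonneg_left (by norm_num) h2 (by linarith)

lemma tsum_div (n : ℕ) (hn : 1 ≤ n) (f : ℕ → ℝ≥0∞) : ∑' k : ℕ, f (k / n) = n * ∑' m, f m := by
  have : NeZero n := ⟨by omega⟩
  rw [← (Nat.divModEquiv n).symm.tsum_eq, ENNReal.tsum_prod'
      (f := fun c : ℕ × Fin n => f ((Nat.divModEquiv n).symm c / n)), ← ENNReal.tsum_mul_left]
  congr 1
  ext m
  have : ∀ b : Fin n, ((Nat.divModEquiv n).symm (m, b)) / n = m := by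
    intro b
    exact congrArg Prod.fst ((Nat.divModEquiv n).apply_symm_apply (m, b))
  simp only [this]
  simp [tsum_fintype]

lemma F_upper (θ : ℝ) (hθ : 0 < θ) (hθπ : θ < Real.pi) (α : ℝ) (hα : 1 < α) (X : ℕ → ℝ)
    (hX : ∀ k, 1 ≤ k → 0 < X k) (a : ℝ) (ha : 0 < a)
    (hXa : ∀ k : ℕ, 1 ≤ k → a * (k : ℝ) ^ α ≤ X k) (y : ℝ) (hy : 0 < y) (n : ℕ) (hn : 1 ≤ n)
    (hyn : y ≤ a * (n : ℝ) ^ α) :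
    ∑' k : ℕ, ENNReal.ofReal (Theta θ (X (k + 1)) y) ≤
      ENNReal.ofReal (n * (3 * Real.pi * ∑' m : ℕ, 1 / ((m : ℝ) ^ α + 1))) := by
  have hpi := Real.pi_pos
  have hnn : ∀ m : ℕ, (0 : ℝ) ≤ 3 * Real.pi * (1 / ((m : ℝ) ^ α + 1)) := fun m => by positivity
  rw [ENNReal.ofReal_mul (by positivity), ← tsum_mul_left,
    ENNReal.ofReal_tsum_of_nonneg hnn ((summable_h α hα).mul_left _), ENNReal.ofReal_natCast,
    ← tsum_div n hn (fun m => ENNReal.ofReal (3 * Real.pi * (1 / ((m : ℝ) ^ α + 1))))]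
  refine ENNReal.tsum_le_tsum fun k => ENNReal.ofReal_le_ofReal ?_
  have hxk := hX (k + 1) (by omega)
  refine (Theta_upper θ _ y hθ hθπ hxk hy).trans ?_
  have hm : ((k / n : ℕ) : ℝ) * n ≤ ((k + 1 : ℕ) : ℝ) := by
    have := Nat.div_mul_le_self k n
    exact_mod_cast (this.trans (Nat.le_succ k))
  have hm2 : ((k / n : ℕ) : ℝ) ^ α * (n : ℝ) ^ α ≤ ((k + 1 : ℕ) : ℝ) ^ α := by
    rw [← Real.mul_rpow (by positivity) (by positivity)]
    exact Real.rpow_le_rpow (by positivity) hm (by linarith)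
  have h0 : (0 : ℝ) ≤ ((k / n : ℕ) : ℝ) ^ α := by positivity
  gcongr 3 * Real.pi * ?_
  rw [div_le_div_iff₀ (by positivity) (by positivity)]
  have : y * ((k / n : ℕ) : ℝ) ^ α ≤ X (k + 1) := by
    calc y * ((k / n : ℕ) : ℝ) ^ α ≤ a * (n : ℝ) ^ α * ((k / n : ℕ) : ℝ) ^ α := by gcongr
      _ = a * (((k / n : ℕ) : ℝ) ^ α * (n : ℝ) ^ α) := by ring
      _ ≤ a * ((k + 1 : ℕ) : ℝ) ^ α := by gcongr
      _ ≤ _ := hXa _ (by omega)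
  nlinarith

lemma X_bounds (α : ℝ) (X : ℕ → ℝ) (hX : ∀ k, 1 ≤ k → 0 < X k)
    (h : (fun k : ℕ => Real.log (X k) - α * Real.log k) =O[atTop] fun _ : ℕ => (1 : ℝ)) :
    ∃ a b : ℝ, 0 < a ∧ 0 < b ∧ (∀ k : ℕ, 1 ≤ k → a * (k : ℝ) ^ α ≤ X k) ∧
      (∀ k : ℕ, 1 ≤ k → X k ≤ b * (k : ℝ) ^ α) := by
  obtain ⟨M, hM⟩ := (isBigO_one_nat_atTop_iff).1 h
  refine ⟨Real.exp (-M), Real.exp M, Real.exp_pos _, Real.exp_pos _, ?_, ?_⟩ <;>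
  · intro k hk
    have hk' : (0 : ℝ) < k := by exact_mod_cast hk
    have := abs_le.1 (hM k)
    rw [Real.rpow_def_of_pos hk', ← Real.exp_add]
    first
      | rw [← Real.le_log_iff_exp_le (hX k hk)]; linarith
      | rw [← Real.log_le_iff_le_exp (hX k hk)]; linarith

lemma phi_iff (θ : ℝ) (X Y : ℕ → ℝ) (j : ℕ) (q : ℝ) :
    phi θ X Y j = ENNReal.ofReal q ↔
    ∑' k : ℕ, ENNReal.ofReal (Theta θ (X (k + 1)) (Y j)) = ENNReal.ofReal (Real.pi * q) := by
  have hpi := Real.pi_pos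
  unfold phi
  have h1 : ENNReal.ofReal Real.pi * ENNReal.ofReal (1 / Real.pi) = 1 := by
    rw [← ENNReal.ofReal_mul hpi.le]; simp [hpi.ne']
  constructor
  · intro h
    rw [ENNReal.ofReal_mul hpi.le, ← h, ← mul_assoc, h1, one_mul]
  · intro h
    rw [h, ENNReal.ofReal_mul hpi.le, ← mul_assoc, mul_comm (ENNReal.ofReal (1 / Real.pi)), h1,
      one_mul]

lemma F_top (θ : ℝ) (hθ : 0 < θ) (hθπ : θ < Real.pi) (α : ℝ) (hα : α ≤ 1) (X : ℕ → ℝ)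
    (hX : ∀ k, 1 ≤ k → 0 < X k) (b : ℝ) (hb : 0 < b)
    (hXb : ∀ k : ℕ, 1 ≤ k → X k ≤ b * (k : ℝ) ^ α) (y : ℝ) (hy : 0 < y) :
    ∑' k : ℕ, ENNReal.ofReal (Theta θ (X (k + 1)) y) = ⊤ := by
  have hs : 0 < Real.sin θ := Real.sin_pos_of_pos_of_lt_pi hθ hθπ
  by_contra hne
  have hbd : ∀ k : ℕ, Real.sin θ * y / (b + y) * (1 / ((k + 1 : ℕ) : ℝ)) ≤
      Theta θ (X (k + 1)) y := by
    intro k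
    have hxk := hX (k + 1) (by omega)
    refine le_trans ?_ (Theta_lower θ _ y hθ hθπ hxk hy)
    have hk : (1 : ℝ) ≤ ((k + 1 : ℕ) : ℝ) := by exact_mod_cast Nat.succ_le_succ (Nat.zero_le k)
    have h1 : X (k + 1) ≤ b * ((k + 1 : ℕ) : ℝ) := by
      refine (hXb _ (by omega)).trans ?_
      gcongr
      calc ((k + 1 : ℕ) : ℝ) ^ α ≤ ((k + 1 : ℕ) : ℝ) ^ (1 : ℝ) :=
            Real.rpow_le_rpow_of_exponent_le hk hα
        _ = _ := Real.rpow_one _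
    rw [div_mul_div_comm, mul_one, mul_div_assoc']
    apply div_le_div_of_nonneg_left (by positivity) (by positivity)
    nlinarith
  have hsum : Summable (fun k : ℕ => Theta θ (X (k + 1)) y) := by
    have h := ENNReal.summable_toReal hne
    refine h.congr fun k => ?_
    rw [ENNReal.toReal_ofReal]
    exact le_trans (by positivity) (hbd k)
  have h2 := Summable.of_nonneg_of_le (fun k => by positivity) hbd hsum
  rw [summable_mul_left_iff (by positivity)] at h2
  exact Real.not_summable_one_div_natCast ((summable_nat_add_iff 1).1 h2)

lemma F_exists (θ : ℝ) (hθ : 0 < θ) (hθπ : θ < Real.pi) (α : ℝ) (hα : 1 < α) (X : ℕ → ℝ)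
    (hX : ∀ k, 1 ≤ k → 0 < X k) (a b : ℝ) (ha : 0 < a) (hb : 0 < b)
    (hXa : ∀ k : ℕ, 1 ≤ k → a * (k : ℝ) ^ α ≤ X k)
    (hXb : ∀ k : ℕ, 1 ≤ k → X k ≤ b * (k : ℝ) ^ α) (q : ℝ) (hq : 0 < q) :
    ∃ y : ℝ, 0 < y ∧ ∑' k : ℕ, ENNReal.ofReal (Theta θ (X (k + 1)) y) = ENNReal.ofReal q := by
  have hs : 0 < Real.sin θ := Real.sin_pos_of_pos_of_lt_pi hθ hθπ
  have hpi := Real.pi_pos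
  have T0 : ∀ k : ℕ, Theta θ (X (k + 1)) 0 = 0 := by
    intro k
    unfold Theta
    simp [Complex.arg_ofReal_of_nonneg (hX (k + 1) (by omega)).le]
  have Tnn : ∀ (k : ℕ) (y : ℝ), 0 ≤ y → 0 ≤ Theta θ (X (k + 1)) y := by
    intro k y hy
    refine Complex.arg_nonneg_iff.2 ?_
    rw [zim]; positivity
  obtain ⟨N, hN⟩ := exists_nat_ge (q / (Real.sin θ / 2))
  rw [div_le_iff₀ (by positivity)] at hN
  set R : ℝ := b * ((N + 1 : ℕ) : ℝ) ^ α with hR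
  have hRpos : 0 < R := by positivity
  have hbd : ∀ (k : ℕ) (y : ℝ), y ∈ Set.Icc 0 R →
      ‖Theta θ (X (k + 1)) y‖ ≤ 3 * Real.pi * R / a * (1 / ((k + 1 : ℕ) : ℝ) ^ α) := by
    intro k y hy
    rw [Real.norm_of_nonneg (Tnn k y hy.1)]
    rcases hy.1.eq_or_lt with h0 | h0
    · rw [← h0, T0]; positivity
    · have hxk := hX (k + 1) (by omega)
      refine (Theta_upper θ _ y hθ hθπ hxk h0).trans ?_
      have : y / (X (k + 1) + y) ≤ R / (a * ((k + 1 : ℕ) : ℝ) ^ α) := by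
        apply div_le_div₀ hRpos.le hy.2 (by positivity)
        linarith [hXa (k + 1) (by omega)]
      calc _ ≤ 3 * Real.pi * (R / (a * ((k + 1 : ℕ) : ℝ) ^ α)) := by gcongr
        _ = _ := by field_simp
  have hsb : Summable (fun k : ℕ => 3 * Real.pi * R / a * (1 / ((k + 1 : ℕ) : ℝ) ^ α)) :=
    ((summable_nat_add_iff 1).2 (Real.summable_one_div_nat_rpow.2 hα)).mul_left _
  have hcont : ContinuousOn (fun y => ∑' k : ℕ, Theta θ (X (k + 1)) y) (Set.Icc 0 R) := by
    refine continuousOn_tsum (fun k => ?_) hsb hbd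
    intro y hy
    apply ContinuousAt.continuousWithinAt
    unfold Theta
    have hmem : ((X (k + 1) : ℝ) : ℂ) + (y : ℂ) * Complex.exp (θ * Complex.I)
        ∈ Complex.slitPlane := by
      rw [Complex.mem_slitPlane_iff, zre, zim]
      rcases hy.1.eq_or_lt with h0 | h0
      · left; rw [← h0]; simpa using hX (k + 1) (by omega)
      · right; positivity
    exact ContinuousAt.comp (f := fun y : ℝ => ((X (k + 1) : ℝ) : ℂ) +
      (y : ℂ) * Complex.exp (θ * Complex.I)) (Complex.continuousAt_arg hmem) (by fun_prop)
  have hEq : ∀ y ∈ Set.Icc 0 R, ∑' k : ℕ, ENNReal.ofReal (Theta θ (X (k + 1)) y) =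
      ENNReal.ofReal (∑' k : ℕ, Theta θ (X (k + 1)) y) := by
    intro y hy
    rw [ENNReal.ofReal_tsum_of_nonneg (fun k => Tnn k y hy.1)]
    exact Summable.of_norm_bounded hsb (fun k => hbd k y hy)
  have hlow := F_lower θ hθ hθπ X hX R hRpos N (by
    intro k hk
    refine (hXb _ (by omega)).trans ?_
    rw [hR]
    gcongr)
  rw [hEq R ⟨hRpos.le, le_rfl⟩, ENNReal.ofReal_le_ofReal_iff
    (tsum_nonneg fun k => Tnn k R hRpos.le)] at hlow
  have hivt := intermediate_value_Icc hRpos.le hcont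
  obtain ⟨y, hy, hyq⟩ := hivt (show q ∈ Set.Icc _ _ by
    refine ⟨?_, hN.trans hlow⟩
    simp only [T0, tsum_zero]
    exact hq.le)
  refine ⟨y, ?_, ?_⟩
  · rcases hy.1.eq_or_lt with h0 | h0
    · exfalso
      rw [← h0] at hyq
      simp only [T0, tsum_zero] at hyq
      exact hq.ne hyq
    · exact h0
  · rw [hEq y hy]
    exact congrArg _ hyq

lemma rpow_root (α : ℝ) (hα : 1 < α) (t : ℝ) (ht : 0 < t) : (t ^ (1 / α)) ^ α = t := by
  rw [← Real.rpow_mul ht.le, one_div, inv_mul_cancel₀ (by linarith), Real.rpow_one]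

lemma F_asymp (θ : ℝ) (hθ : 0 < θ) (hθπ : θ < Real.pi)
    (Q : ℕ → ℝ) 
    (hQ : (fun k : ℕ => Q k - (k : ℝ)) =O[atTop] fun _ : ℕ => (1 : ℝ))
    (α : ℝ) (hα : 1 < α) (X : ℕ → ℝ)
    (hX : ∀ k, 1 ≤ k → 0 < X k) (a b : ℝ) (ha : 0 < a) (hb : 0 < b)
    (hXa : ∀ k : ℕ, 1 ≤ k → a * (k : ℝ) ^ α ≤ X k)
    (hXb : ∀ k : ℕ, 1 ≤ k → X k ≤ b * (k : ℝ) ^ α) (Y : ℕ → ℝ)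
    (hY : ∀ j, 1 ≤ j → 0 < Y j)
    (hF : ∀ j, 1 ≤ j → ∑' k : ℕ, ENNReal.ofReal (Theta θ (X (k + 1)) (Y j)) =
      ENNReal.ofReal (Real.pi * Q j)) :
    (fun j : ℕ => Real.log (Y j) - α * Real.log j) =O[atTop] fun _ : ℕ => (1 : ℝ) := by
  have hs : 0 < Real.sin θ := Real.sin_pos_of_pos_of_lt_pi hθ hθπ
  have hpi := Real.pi_pos
  have hα0 : 0 < α := by linarith
  obtain ⟨M, hM⟩ := (isBigO_one_nat_atTop_iff).1 hQ
  set H : ℝ := ∑' m : ℕ, 1 / ((m : ℝ) ^ α + 1) with hH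
  have hHpos : 0 < H := by
    refine (summable_h α hα).tsum_pos (fun m => by positivity) 0 (by positivity)
  set c : ℝ := 1 / (12 * H) with hc
  have hcpos : 0 < c := by positivity
  set C : ℝ := 1 + Real.pi * (1 + |M|) / (Real.sin θ / 2) with hC
  have hCpos : 0 < C := by positivity
  have hlogt : ∀ (d y : ℝ), 0 < d → 0 < y →
      α * Real.log ((y / d) ^ (1 / α)) = Real.log y - Real.log d := by
    intro d y hd hy
    rw [Real.log_rpow (by positivity), Real.log_div hy.ne' hd.ne']
    field_simp
  refine IsBigO.of_bound (|Real.log b + α * Real.log C| + |Real.log a + α * Real.log c|) ?_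
  filter_upwards [eventually_ge_atTop 1, eventually_ge_atTop ⌈2 * M⌉₊,
    eventually_ge_atTop ⌈12 * H⌉₊] with j hj1 hj2 hj3
  have hj : (1 : ℝ) ≤ j := by exact_mod_cast hj1
  have hj2' : 2 * M ≤ j := Nat.ceil_le.1 hj2
  have hj3' : 12 * H ≤ j := Nat.ceil_le.1 hj3
  have hy := hY j hj1
  have hFj := hF j hj1
  have hMj := abs_le.1 (hM j)
  have hQlow : (j : ℝ) / 2 ≤ Q j := by linarith
  have hQup : Q j ≤ (1 + |M|) * j := by nlinarith [le_abs_self M, abs_nonneg M]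
  -- upper bound
  have hup : Real.log (Y j) - α * Real.log j ≤ Real.log b + α * Real.log C := by
    set t : ℝ := (Y j / b) ^ (1 / α) with ht
    have htpos : 0 < t := by positivity
    have hta : t ^ α = Y j / b := rpow_root α hα _ (by positivity)
    have hl := F_lower θ hθ hθπ X hX (Y j) hy ⌊t⌋₊ (by
      intro k hk
      refine (hXb _ (by omega)).trans ?_
      have h1 : ((k + 1 : ℕ) : ℝ) ≤ t :=
        le_trans (by exact_mod_cast hk) (Nat.floor_le htpos.le)
      calc b * ((k + 1 : ℕ) : ℝ) ^ α ≤ b * t ^ α := by gcongr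
        _ = Y j := by rw [hta]; field_simp)
    rw [hFj, ENNReal.ofReal_le_ofReal_iff (by nlinarith)] at hl
    have hfl := Nat.lt_floor_add_one t
    have htC : t ≤ C * j := by
      have h1 : (⌊t⌋₊ : ℝ) ≤ Real.pi * (1 + |M|) / (Real.sin θ / 2) * j := by
        rw [div_mul_eq_mul_div, le_div_iff₀ (by positivity)]
        refine hl.trans ?_
        rw [mul_assoc]
        gcongr
      rw [hC, add_mul]; linarith
    have := Real.log_le_log htpos htC
    rw [Real.log_mul hCpos.ne' (by positivity)] at this
    have h2 := hlogt b (Y j) hb hy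
    rw [← ht] at h2
    nlinarith
  have hlo : Real.log a + α * Real.log c ≤ Real.log (Y j) - α * Real.log j := by
    set t : ℝ := (Y j / a) ^ (1 / α) with ht
    have htpos : 0 < t := by positivity
    have hta : t ^ α = Y j / a := rpow_root α hα _ (by positivity)
    have hu := F_upper θ hθ hθπ α hα X hX a ha hXa (Y j) hy ⌈t⌉₊ (Nat.ceil_pos.2 htpos) (by
      have h1 : t ≤ (⌈t⌉₊ : ℝ) := Nat.le_ceil t
      calc Y j = a * t ^ α := by rw [hta]; field_simp
        _ ≤ _ := by gcongr)
    rw [hFj, ← hH, ENNReal.ofReal_le_ofReal_iff (by positivity)] at hu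
    have hcl := Nat.ceil_lt_add_one htpos.le
    have h1 : Q j ≤ (t + 1) * (3 * H) := by
      have h3 : Real.pi * Q j ≤ Real.pi * (⌈t⌉₊ * (3 * H)) := by linarith
      have h4 := le_of_mul_le_mul_left h3 hpi
      refine h4.trans ?_
      gcongr
    have htc : c * j ≤ t := by
      rw [hc, div_mul_eq_mul_div, one_mul, div_le_iff₀ (by positivity)]
      nlinarith
    have := Real.log_le_log (by positivity) htc
    rw [Real.log_mul hcpos.ne' (by positivity)] at this
    have h2 := hlogt a (Y j) ha hy
    rw [← ht] at h2
    nlinarith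
  rw [norm_one, mul_one, Real.norm_eq_abs, abs_le]
  have e1 := le_abs_self (Real.log b + α * Real.log C)
  have e2 := neg_abs_le (Real.log a + α * Real.log c)
  have e3 := abs_nonneg (Real.log b + α * Real.log C)
  have e4 := abs_nonneg (Real.log a + α * Real.log c)
  constructor <;> linarith

theorem stmt_10 (θ : ℝ) (hθ : 0 < θ) (hθπ : θ < Real.pi)
    (Q : ℕ → ℝ) (hQpos : ∀ k, 1 ≤ k → 0 < Q k)
    (hQ : (fun k : ℕ => Q k - (k : ℝ)) =O[atTop] fun _ : ℕ => (1 : ℝ)) :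
    (∀ α : ℝ, 1 < α → ∀ X : ℕ → ℝ, (∀ k, 1 ≤ k → 0 < X k) →
      ((fun k : ℕ => Real.log (X k) - α * Real.log k) =O[atTop] fun _ : ℕ => (1 : ℝ)) →
      (∃ Y : ℕ → ℝ, (∀ j, 1 ≤ j → 0 < Y j) ∧
        ∀ j, 1 ≤ j → phi θ X Y j = ENNReal.ofReal (Q j)) ∧
      (∀ Y : ℕ → ℝ, (∀ j, 1 ≤ j → 0 < Y j) →
        (∀ j, 1 ≤ j → phi θ X Y j = ENNReal.ofReal (Q j)) →
        (fun j : ℕ => Real.log (Y j) - α * Real.log j) =O[atTop] fun _ : ℕ => (1 : ℝ))) ∧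
    (∀ α : ℝ, 0 < α → α ≤ 1 → ∀ X : ℕ → ℝ, (∀ k, 1 ≤ k → 0 < X k) →
      ((fun k : ℕ => Real.log (X k) - α * Real.log k) =O[atTop] fun _ : ℕ => (1 : ℝ)) →
      (∀ Y : ℕ → ℝ, (∀ j, 1 ≤ j → 0 < Y j) → ∀ j, 1 ≤ j → phi θ X Y j = ⊤) ∧
      ¬ ∃ Y : ℕ → ℝ, (∀ j, 1 ≤ j → 0 < Y j) ∧
        ∀ j, 1 ≤ j → phi θ X Y j = ENNReal.ofReal (Q j)) := by
  refine ⟨?_, ?_⟩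
  · intro α hα X hX hXO
    obtain ⟨a, b, ha, hb, hXa, hXb⟩ := X_bounds α X hX hXO
    refine ⟨?_, ?_⟩
    · have hex : ∀ j : ℕ, ∃ y : ℝ, 1 ≤ j → 0 < y ∧
          ∑' k : ℕ, ENNReal.ofReal (Theta θ (X (k + 1)) y) = ENNReal.ofReal (Real.pi * Q j) := by
        intro j
        by_cases hj : 1 ≤ j
        · obtain ⟨y, hy⟩ := F_exists θ hθ hθπ α hα X hX a b ha hb hXa hXb (Real.pi * Q j)
            (mul_pos Real.pi_pos (hQpos j hj))
          exact ⟨y, fun _ => hy⟩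
        · exact ⟨0, fun h => absurd h hj⟩
      choose Y hY using hex
      exact ⟨Y, fun j hj => (hY j hj).1, fun j hj => (phi_iff θ X Y j (Q j)).2 (hY j hj).2⟩
    · intro Y hY hphi
      exact F_asymp θ hθ hθπ Q hQ α hα X hX a b ha hb hXa hXb Y hY
        (fun j hj => (phi_iff θ X Y j (Q j)).1 (hphi j hj))
  · intro α _ hα X hX hXO
    obtain ⟨a, b, ha, hb, hXa, hXb⟩ := X_bounds α X hX hXO
    have htop : ∀ Y : ℕ → ℝ, (∀ j, 1 ≤ j → 0 < Y j) → ∀ j, 1 ≤ j → phi θ X Y j = ⊤ := by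
      intro Y hY j hj
      unfold phi
      rw [F_top θ hθ hθπ α hα X hX b hb hXb (Y j) (hY j hj)]
      refine ENNReal.mul_top ?_
      simp [Real.pi_pos]
    refine ⟨htop, ?_⟩
    rintro ⟨Y, hY, hphi⟩
    have h1 := hphi 1 le_rfl
    rw [htop Y hY 1 le_rfl] at h1
    exact ENNReal.ofReal_ne_top h1.symm
end
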